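/- arXiv:math/0607598 — 2 statements merged into one kernel-verified Lean document; each statement's English description precedes it below -/
import Mathlib

section
/- Let f be a quasiperiodically forced circle homeomorphism over an irrational ω with lift F whose fibered rotation number is ρ₀. Suppose there exist an f-invariant ergodic Borel probability measure μ on T¹×T¹ and a family (μ_θ)_{θ∈T¹} of atomless Borel probability measures on T¹ such that θ ↦ μ_θ(B) is measurable for every Borel set B ⊆ T¹, μ(A) = ∫_{T¹} μ_θ(A_θ) dθ for every Borel set A ⊆ T¹×T¹ (where A_θ := {x ∈ T¹ : (θ,x) ∈ A} and dθ is the Haar probability measure on T¹), and (f_θ)_* μ_θ = μ_{θ+ω} for every θ. Then for every ε > 0, if ρ₊ is the fibered rotation number of F_ε and ρ₋ that of F_{−ε}, one has ρ₋ < ρ₀ < ρ₊. -/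
open Filter Topology MeasureTheory
open scoped ENNReal

noncomputable section

/-- The circle `T¹ = ℝ/ℤ`. -/
abbrev T1 := AddCircle (1 : ℝ)

/-- Fiberwise iterate of the skew product: `fiberIter ω F n θ x = F^n_θ(x)`. -/
def fiberIter (ω : ℝ) (F : T1 → ℝ → ℝ) : ℕ → T1 → ℝ → ℝ
  | 0, _, x => x
  | n + 1, θ, x => fiberIter ω F n (θ + (ω : T1)) (F θ x)

/-- `F` is (the fiber part of) a lift of a quasiperiodically forced circle homeomorphism
over `ω`: `F(θ,x) = (θ+ω, F_θ(x))`, each `F_θ` a strictly increasing homeomorphism of `ℝ`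
commuting with `x ↦ x+1`. -/
structure IsQpfLift (ω : ℝ) (F : T1 → ℝ → ℝ) : Prop where
  cont : Continuous fun p : T1 × ℝ => F p.1 p.2
  mono : ∀ θ, StrictMono (F θ)
  surj : ∀ θ, Function.Surjective (F θ)
  per  : ∀ θ x, F θ (x + 1) = F θ x + 1

/-- `ρ` is the fibered rotation number of the lift `F`. -/
def HasRotNum (ω : ℝ) (F : T1 → ℝ → ℝ) (ρ : ℝ) : Prop :=
  ∀ θ x, Tendsto (fun n : ℕ => (fiberIter ω F n θ x - x) / n) atTop (𝓝 ρ)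

/-!
Let `H_θ` be the lifted distribution function of `μ_θ`. Equivariance of the fibre measures says that
`H` turns `F` into fibrewise translations: `H_{Tθ} (F_θ x) - H_{Tθ} (F_θ y) = H_θ x - H_θ y`. Hence
the Birkhoff averages of the level gain `H_{Tθ} (F_θ x + e) - H_{Tθ} (F_θ x)` along the perturbed
lift `F_e` converge to `ρ - ρ₀`, and the gain has the sign of `e`. Suppose `ρ = ρ₀`. Then in almost
every fibre some orbit of `F_e` gains arbitrarily little level up to a prescribed time `m`. The
points whose level is close to that of such an orbit have measure bounded below uniformly in `m`,
and as `m → ∞` they decrease to a forward invariant set, which by ergodicity has full measure. So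
close to every level of `H_{Tθ}` there is an interval of length `|e|` on which `H_{Tθ}` is almost
constant, and a map of degree one has no room for that many disjoint intervals.
-/

open Function ProbabilityTheory

/-- The representative in `[0, 1)` of a point of the circle. -/
def unitRep (ξ : T1) : ℝ := AddCircle.equivIco 1 0 ξ

lemma coe_unitRep (ξ : T1) : (unitRep ξ : T1) = ξ := AddCircle.coe_equivIco

lemma unitRep_nonneg (ξ : T1) : 0 ≤ unitRep ξ := (AddCircle.equivIco 1 0 ξ).2.1

lemma unitRep_lt_one (ξ : T1) : unitRep ξ < 1 :=
  (AddCircle.equivIco 1 0 ξ).2.2.trans_eq (zero_add 1)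

lemma measurable_unitRep : Measurable unitRep :=
  measurable_subtype_coe.comp (AddCircle.measurableEquivIco 1 0).measurable

lemma coe_eq_coe_iff_exists_add_int {x y : ℝ} : (x : T1) = y ↔ ∃ n : ℤ, y = x + n := by
  rw [eq_comm, ← sub_eq_zero, ← AddCircle.coe_sub, AddCircle.coe_eq_zero_iff]
  simp only [zsmul_eq_mul, mul_one, eq_comm, sub_eq_iff_eq_add']

lemma abs_floor_sub_unitRep_sub_le (x : ℝ) (ξ : T1) : |(⌊x - unitRep ξ⌋ : ℝ) - x| ≤ 2 := by
  have h0 := unitRep_nonneg ξ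
  have h1 := unitRep_lt_one ξ
  have hlo := Int.sub_one_lt_floor (x - unitRep ξ)
  have hhi := Int.floor_le (x - unitRep ξ)
  exact abs_le.2 ⟨by linarith, by linarith⟩

lemma measurable_floor_sub_unitRep :
    Measurable fun p : ℝ × T1 => (⌊p.1 - unitRep p.2⌋ : ℝ) :=
  measurable_from_top.comp
    (measurable_fst.sub (measurable_unitRep.comp measurable_snd)).floor

lemma aestronglyMeasurable_floor_sub_unitRep (m : Measure T1) (x : ℝ) :
    AEStronglyMeasurable (fun ξ => (⌊x - unitRep ξ⌋ : ℝ)) m :=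
  (measurable_floor_sub_unitRep.comp measurable_prodMk_left).aestronglyMeasurable

lemma integrable_floor_sub_unitRep (m : Measure T1) [IsFiniteMeasure m] (x : ℝ) :
    Integrable (fun ξ => (⌊x - unitRep ξ⌋ : ℝ)) m := by
  refine .of_bound (aestronglyMeasurable_floor_sub_unitRep m x) (2 + |x|) (.of_forall fun ξ => ?_)
  have := abs_add_le (⌊x - unitRep ξ⌋ - x : ℝ) x
  rw [sub_add_cancel] at this
  exact this.trans (by gcongr; exact abs_floor_sub_unitRep_sub_le x ξ)

/-- The lifted distribution function of a probability measure on the circle. The integrand counts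
the lifts of `ξ` in `(0, x]`, up to a normalisation at `0`; hence increments of `cdfLift m` are
`m`-measures of arcs. -/
def cdfLift (m : Measure T1) [IsProbabilityMeasure m] : CircleDeg1Lift where
  toFun x := ∫ ξ, (⌊x - unitRep ξ⌋ : ℝ) ∂m
  monotone' x y hxy := integral_mono (integrable_floor_sub_unitRep m x)
    (integrable_floor_sub_unitRep m y) fun ξ => by dsimp only; gcongr
  map_add_one' x := by
    simp only [add_sub_right_comm x 1, Int.floor_add_one, Int.cast_add, Int.cast_one]
    rw [integral_add (integrable_floor_sub_unitRep m x) (integrable_const 1)]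
    simp

section CdfLift

variable (m : Measure T1) [IsProbabilityMeasure m]

lemma cdfLift_apply (x : ℝ) : cdfLift m x = ∫ ξ, (⌊x - unitRep ξ⌋ : ℝ) ∂m := rfl

lemma cdfLift_sub_cdfLift (x y : ℝ) :
    cdfLift m x - cdfLift m y = ∫ ξ, ((⌊x - unitRep ξ⌋ : ℝ) - ⌊y - unitRep ξ⌋) ∂m :=
  (integral_sub (integrable_floor_sub_unitRep m x) (integrable_floor_sub_unitRep m y)).symm

lemma abs_cdfLift_sub_le (x : ℝ) : |cdfLift m x - x| ≤ 2 := by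
  have hsub : cdfLift m x - x = ∫ ξ, ((⌊x - unitRep ξ⌋ : ℝ) - x) ∂m := by
    rw [integral_sub (integrable_floor_sub_unitRep m x) (integrable_const x), cdfLift_apply]
    simp
  have hbound (ξ : T1) : ‖(⌊x - unitRep ξ⌋ : ℝ) - x‖ ≤ 2 := abs_floor_sub_unitRep_sub_le x ξ
  rw [hsub]
  simpa using norm_integral_le_of_norm_le_const (μ := m) (.of_forall hbound)

lemma continuousAt_floor_sub_unitRep {x : ℝ} {ξ : T1} (hξ : ξ ≠ x) :
    ContinuousAt (fun y : ℝ => (⌊y - unitRep ξ⌋ : ℝ)) x := by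
  have hne : (⌊x - unitRep ξ⌋ : ℝ) ≠ x - unitRep ξ := fun h => hξ <| by
    rw [← coe_unitRep ξ, coe_eq_coe_iff_exists_add_int]
    exact ⟨⌊x - unitRep ξ⌋, by linarith⟩
  have hlt : (⌊x - unitRep ξ⌋ : ℝ) < x - unitRep ξ := (Int.floor_le _).lt_of_ne hne
  have hc : ContinuousAt (fun y : ℝ => y - unitRep ξ) x := by fun_prop
  refine (continuousAt_const (y := (⌊x - unitRep ξ⌋ : ℝ))).congr ?_
  filter_upwards [hc.eventually_const_lt hlt,
    hc.eventually_lt_const (Int.lt_floor_add_one (x - unitRep ξ))] with y hy1 hy2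
  exact congrArg _ (Int.floor_eq_iff.2 ⟨hy1.le, hy2⟩).symm

lemma continuous_cdfLift [NullSingletonClass m] : Continuous (cdfLift m) := by
  refine continuous_iff_continuousAt.2 fun x => ?_
  refine tendsto_integral_filter_of_dominated_convergence (fun _ => 3 + |x|)
    (.of_forall fun y => aestronglyMeasurable_floor_sub_unitRep m y) ?_ (integrable_const _) ?_
  · filter_upwards [Metric.ball_mem_nhds x one_pos] with y hy
    refine .of_forall fun ξ => ?_
    have hfloor := abs_floor_sub_unitRep_sub_le y ξ
    have htri := abs_add_three (⌊y - unitRep ξ⌋ - y : ℝ) (y - x) x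
    rw [sub_add_sub_cancel, sub_add_cancel] at htri
    rw [Metric.mem_ball, Real.dist_eq] at hy
    exact htri.trans (by linarith)
  · filter_upwards [compl_mem_ae_iff.2 (measure_singleton (μ := m) (x : T1))] with ξ hξ
    exact continuousAt_floor_sub_unitRep hξ

lemma floor_sub_floor_le_indicator {x y : ℝ} (hxy : x ≤ y) (hyx : y ≤ x + 1) (ξ : T1) :
    (⌊y - unitRep ξ⌋ : ℝ) - ⌊x - unitRep ξ⌋ ≤
      ((fun z : ℝ => (z : T1)) '' Set.Icc x y).indicator 1 ξ := by
  rcases (Int.floor_le_floor (sub_le_sub_right hxy (unitRep ξ))).lt_or_eq with hlt | heq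
  · have hmem : ξ ∈ (fun z : ℝ => (z : T1)) '' Set.Icc x y := by
      have hx := Int.floor_lt.1 hlt
      have hy := Int.floor_le (y - unitRep ξ)
      refine ⟨unitRep ξ + ⌊y - unitRep ξ⌋, ⟨by linarith, by linarith⟩, ?_⟩
      exact (coe_eq_coe_iff_exists_add_int.2 ⟨_, rfl⟩).symm.trans (coe_unitRep ξ)
    have hle : ⌊y - unitRep ξ⌋ ≤ ⌊x - unitRep ξ⌋ + 1 := by
      rw [← Int.floor_add_one]
      exact Int.floor_le_floor (by linarith)
    rw [Set.indicator_of_mem hmem, Pi.one_apply, sub_le_iff_le_add']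
    exact_mod_cast hle
  · rw [heq, sub_self]
    exact Set.indicator_nonneg (fun _ _ => zero_le_one) ξ

lemma cdfLift_sub_cdfLift_le_measureReal {x y : ℝ} (hxy : x ≤ y) (hyx : y ≤ x + 1) :
    cdfLift m y - cdfLift m x ≤ m.real ((fun z : ℝ => (z : T1)) '' Set.Icc x y) := by
  have hmeas : MeasurableSet ((fun z : ℝ => (z : T1)) '' Set.Icc x y) :=
    (isCompact_Icc.image (AddCircle.continuous_mk' 1)).isClosed.measurableSet
  rw [cdfLift_sub_cdfLift, ← integral_indicator_one hmeas]
  exact integral_mono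
    ((integrable_floor_sub_unitRep m y).sub (integrable_floor_sub_unitRep m x))
    ((integrable_const (1 : ℝ)).indicator hmeas) (floor_sub_floor_le_indicator hxy hyx)

lemma two_mul_le_measureReal_image_abs_cdfLift_sub_le [NullSingletonClass m] (a : ℝ) {t : ℝ}
    (ht : t < 1 / 2) :
    2 * t ≤ m.real ((fun z : ℝ => (z : T1)) '' {z | |cdfLift m z - a| ≤ t}) := by
  have hsurj := (cdfLift m).continuous_iff_surjective.1 (continuous_cdfLift m)
  obtain ⟨x, hx⟩ := hsurj (a - t)
  obtain ⟨y, hy⟩ := hsurj (a + t)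
  have hyx : y ≤ x + 1 := by
    refine ((cdfLift m).monotone.reflect_lt ?_).le
    rw [(cdfLift m).map_add_one]
    linarith
  wlog hxy : x ≤ y generalizing x y
  · have hneg : 2 * t ≤ 0 := by linarith [(cdfLift m).monotone (le_of_not_ge hxy)]
    exact hneg.trans measureReal_nonneg
  calc 2 * t = cdfLift m y - cdfLift m x := by rw [hx, hy]; ring
    _ ≤ m.real ((fun z : ℝ => (z : T1)) '' Set.Icc x y) :=
      cdfLift_sub_cdfLift_le_measureReal m hxy hyx
    _ ≤ _ := by
      refine measureReal_mono (Set.image_mono fun z hz => ?_)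
      have hxz := (cdfLift m).monotone hz.1
      have hzy := (cdfLift m).monotone hz.2
      rw [Set.mem_ofPred_eq, abs_le]
      constructor <;> linarith

lemma exists_abs_cdfLift_sub_le_of_ae [NullSingletonClass m] {p : T1 → Prop}
    (hp : ∀ᵐ ξ ∂m, p ξ) (a : ℝ) {t : ℝ} (ht : 0 < t) (ht' : t < 1 / 2) :
    ∃ z : ℝ, |cdfLift m z - a| ≤ t ∧ p z := by
  have hpos : 0 < m.real ((fun z : ℝ => (z : T1)) '' {z | |cdfLift m z - a| ≤ t}) :=
    (mul_pos two_pos ht).trans_le (two_mul_le_measureReal_image_abs_cdfLift_sub_le m a ht')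
  by_contra! hnot
  refine hpos.ne' ((measureReal_eq_zero_iff (measure_ne_top m _)).2
    (measure_mono_null ?_ (ae_iff.1 hp)))
  rintro _ ⟨z, hz, rfl⟩
  exact hnot z hz

lemma floor_map_sub_map {Φ : CircleDeg1Lift} (hΦ : StrictMono Φ) (x y : ℝ) :
    ⌊Φ x - Φ y⌋ = ⌊x - y⌋ := by
  refine eq_of_forall_le_iff fun n => ?_
  rw [Int.le_floor, Int.le_floor, le_sub_iff_add_le', le_sub_iff_add_le', ← Φ.map_add_int,
    hΦ.le_iff_le]

lemma cdfLift_map_sub_cdfLift_map {Φ : CircleDeg1Lift} (hΦ : StrictMono Φ) {φ : T1 → T1}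
    (hφΦ : ∀ x : ℝ, φ x = (Φ x : T1)) {m' : Measure T1} [IsProbabilityMeasure m']
    (hm' : m.map φ = m') (x y : ℝ) :
    cdfLift m' (Φ x) - cdfLift m' (Φ y) = cdfLift m x - cdfLift m y := by
  have hφ : Measurable φ := by
    have heq : φ = fun ξ => (Φ (unitRep ξ) : T1) := by
      ext ξ
      rw [← hφΦ, coe_unitRep]
    rw [heq]
    exact AddCircle.measurable_mk'.comp (Φ.monotone.measurable.comp measurable_unitRep)
  have hmeas : AEStronglyMeasurable
      (fun ξ => (⌊Φ x - unitRep ξ⌋ : ℝ) - ⌊Φ y - unitRep ξ⌋) (m.map φ) :=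
    (aestronglyMeasurable_floor_sub_unitRep _ _).sub (aestronglyMeasurable_floor_sub_unitRep _ _)
  rw [cdfLift_sub_cdfLift, cdfLift_sub_cdfLift, ← hm',
    integral_map hφ.aemeasurable hmeas]
  refine integral_congr_ae (.of_forall fun ξ => ?_)
  obtain ⟨n, hn⟩ : ∃ n : ℤ, unitRep (φ ξ) = Φ (unitRep ξ) + n := by
    rw [← coe_eq_coe_iff_exists_add_int, coe_unitRep, ← hφΦ, coe_unitRep]
  have hfloor (z : ℝ) : ⌊Φ z - unitRep (φ ξ)⌋ = ⌊z - unitRep ξ⌋ - n := by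
    rw [hn, ← sub_sub, Int.floor_sub_intCast, floor_map_sub_map hΦ]
  simp only [hfloor, Int.cast_sub, sub_sub_sub_cancel_right]

end CdfLift

lemma measurable_cdfLift {Θ : Type*} [MeasurableSpace Θ] (κ : Kernel Θ T1) [IsMarkovKernel κ] :
    Measurable fun p : Θ × ℝ => cdfLift (κ p.1) p.2 := by
  have hmeas : Measurable fun q : (Θ × ℝ) × T1 => (⌊q.1.2 - unitRep q.2⌋ : ℝ) :=
    measurable_floor_sub_unitRep.comp ((measurable_snd.comp measurable_fst).prodMk measurable_snd)
  exact (hmeas.stronglyMeasurable.integral_kernel_prod_right'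
    (κ := κ.comap Prod.fst measurable_fst)).measurable

section ErgodicAverages

variable {α β Θ X : Type*} [MeasurableSpace α] {ν : Measure α}

lemma abs_birkhoffAverage_le {T : β → β} {b : β → ℝ} {C : ℝ} (hC : ∀ a, |b a| ≤ C) (n : ℕ)
    (a : β) : |birkhoffAverage ℝ T b n a| ≤ C := by
  have hsum : |birkhoffSum T b n a| ≤ n * C := by
    have hterm (k : ℕ) (_ : k ∈ Finset.range n) : |b (T^[k] a)| ≤ C := hC _
    have hcard := Finset.sum_le_card_nsmul _ _ _ hterm
    rw [Finset.card_range, nsmul_eq_mul] at hcard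
    exact (Finset.abs_sum_le_sum_abs _ _).trans hcard
  rw [birkhoffAverage, smul_eq_mul, abs_mul, abs_of_nonneg (by positivity : (0 : ℝ) ≤ (n : ℝ)⁻¹)]
  exact inv_mul_le_of_le_mul₀ n.cast_nonneg ((abs_nonneg _).trans (hC a)) hsum

lemma integral_eq_of_tendsto_birkhoffAverage [IsProbabilityMeasure ν] {T : α → α}
    (hT : MeasurePreserving T ν ν) {b : α → ℝ} (hb : Measurable b) {C : ℝ} (hC : ∀ a, |b a| ≤ C)
    {c : ℝ} (hc : ∀ᵐ a ∂ν, Tendsto (birkhoffAverage ℝ T b · a) atTop (𝓝 c)) :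
    ∫ a, b a ∂ν = c := by
  have hint (k : ℕ) : Integrable (fun a => b (T^[k] a)) ν :=
    .of_bound (hb.comp (hT.measurable.iterate k)).aestronglyMeasurable C (.of_forall fun a => hC _)
  have hconst : ∀ᶠ n : ℕ in atTop, ∫ a, birkhoffAverage ℝ T b n a ∂ν = ∫ a, b a ∂ν := by
    filter_upwards [eventually_ne_atTop 0] with n hn
    have hterm (k : ℕ) : ∫ a, b (T^[k] a) ∂ν = ∫ a, b a ∂ν := by
      have hk := hT.iterate k
      conv_rhs => rw [← hk.map_eq, integral_map hk.aemeasurable hb.aestronglyMeasurable]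
    simp only [birkhoffAverage, birkhoffSum, smul_eq_mul, integral_const_mul,
      integral_finsetSum _ fun k _ => hint k, hterm, Finset.sum_const, Finset.card_range,
      nsmul_eq_mul]
    exact inv_mul_cancel_left₀ (Nat.cast_ne_zero.2 hn) _
  have hlim : Tendsto (fun n => ∫ a, birkhoffAverage ℝ T b n a ∂ν) atTop (𝓝 (∫ _, c ∂ν)) := by
    refine tendsto_integral_of_dominated_convergence (fun _ => C) (fun n => ?_)
      (integrable_const C) (fun n => .of_forall fun a => ?_) hc
    · exact ((integrable_finsetSum _ fun k _ => hint k).const_mul _).aestronglyMeasurable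
    · exact abs_birkhoffAverage_le hC n a
  simpa using tendsto_nhds_unique (tendsto_const_nhds.congr' (hconst.mono fun _ h => h.symm)) hlim

lemma measurableSet_exists_lt [TopologicalSpace X] [TopologicalSpace.SeparableSpace X] [Nonempty X]
    {g : α → X → ℝ} (hg : ∀ x, Measurable (g · x)) (hgc : ∀ a, Continuous (g a)) (c : ℝ) :
    MeasurableSet {a | ∃ x, g a x < c} := by
  have heq : {a | ∃ x, g a x < c} =
      ⋃ n, {a | g a (TopologicalSpace.denseSeq X n) < c} := by
    ext a
    rw [Set.mem_iUnion]
    refine ⟨fun hx => ?_, fun ⟨n, hn⟩ => ⟨_, hn⟩⟩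
    exact (TopologicalSpace.denseRange_denseSeq X).exists_mem_open
      (isOpen_lt (hgc a) continuous_const) hx
  rw [heq]
  exact .iUnion fun n => measurableSet_lt (hg _) measurable_const

lemma birkhoffSum_iterate_birkhoffSum {M : Type*} [AddCommMonoid M] (S : β → β) (g : β → M)
    (m n : ℕ) (p : β) : birkhoffSum S^[m] (birkhoffSum S g m) n p = birkhoffSum S g (m * n) p := by
  induction n with
  | zero => simp
  | succ n ih => rw [birkhoffSum_succ, ih, Nat.mul_succ, birkhoffSum_add, ← Function.iterate_mul]

lemma tendsto_birkhoffAverage_iterate_birkhoffSum {S : β → β} {g : β → ℝ} {p : β} {c : ℝ}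
    (h : Tendsto (birkhoffAverage ℝ S g · p) atTop (𝓝 c)) (m : ℕ) :
    Tendsto (birkhoffAverage ℝ S^[m] (birkhoffSum S g m) · p) atTop (𝓝 (m * c)) := by
  have heq (n : ℕ) : birkhoffAverage ℝ S^[m] (birkhoffSum S g m) n p =
      m * birkhoffAverage ℝ S g (m * n) p := by
    rcases eq_or_ne m 0 with rfl | hm
    · simp [birkhoffAverage, birkhoffSum]
    · simp only [birkhoffAverage, birkhoffSum_iterate_birkhoffSum, smul_eq_mul, Nat.cast_mul,
        mul_inv, ← mul_assoc, mul_inv_cancel₀ (Nat.cast_ne_zero.2 hm : (m : ℝ) ≠ 0), one_mul]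
  simp only [heq]
  rcases eq_or_ne m 0 with rfl | hm
  · simp
  · exact (h.comp (tendsto_id.const_mul_atTop' (Nat.pos_of_ne_zero hm))).const_mul _

lemma ae_exists_lt_of_tendsto_birkhoffAverage [IsProbabilityMeasure ν] {T : α → α}
    (hT : MeasurePreserving T ν ν) {S : α × X → α × X} (hST : Semiconj Prod.fst S T)
    {g : α × X → ℝ} (hg : ∀ p, 0 ≤ g p) {δ : ℝ} (hδ : 0 < δ)
    (hmeas : MeasurableSet {a | ∃ x, g (a, x) < δ}) {x₀ : X}
    (havg : ∀ᵐ a ∂ν, Tendsto (birkhoffAverage ℝ S g · (a, x₀)) atTop (𝓝 0)) :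
    ∀ᵐ a ∂ν, ∃ x, g (a, x) < δ := by
  set B : Set α := {a | ∃ x, g (a, x) < δ}ᶜ
  have hδB (p : α × X) : B.indicator 1 p.1 ≤ δ⁻¹ * g p := by
    refine Set.indicator_apply_le' (fun hp => ?_)
      fun _ => mul_nonneg (inv_nonneg.2 hδ.le) (hg p)
    have hle : δ ≤ g p := not_lt.1 fun hlt => hp ⟨p.2, hlt⟩
    exact (inv_mul_cancel₀ hδ.ne').symm.trans_le (by gcongr)
  have hB0 (a : α) : (0 : ℝ) ≤ B.indicator 1 a := Set.indicator_nonneg (fun _ _ => zero_le_one) a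
  have hint : ∫ a, B.indicator 1 a ∂ν = (0 : ℝ) := by
    refine integral_eq_of_tendsto_birkhoffAverage hT (C := 1)
      (measurable_one.indicator hmeas.compl) (fun a => ?_) ?_
    · rw [abs_of_nonneg (hB0 a)]
      exact Set.indicator_le_self' (fun _ _ => zero_le_one) a
    filter_upwards [havg] with a ha
    have hlim := ha.const_mul δ⁻¹
    rw [mul_zero] at hlim
    refine squeeze_zero (fun n => ?_) (fun n => ?_) hlim
    · exact mul_nonneg (by positivity) (Finset.sum_nonneg fun k _ => hB0 _)
    · have hsum : birkhoffSum T (B.indicator 1) n a ≤ δ⁻¹ * birkhoffSum S g n (a, x₀) := by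
        rw [birkhoffSum, birkhoffSum, Finset.mul_sum]
        refine Finset.sum_le_sum fun k _ => ?_
        rw [← (hST.iterate_right k).eq (a, x₀)]
        exact hδB _
      rw [birkhoffAverage, birkhoffAverage, smul_eq_mul, smul_eq_mul, mul_left_comm]
      gcongr
  rw [integral_indicator_one hmeas.compl, measureReal_eq_zero_iff (measure_ne_top ν _)] at hint
  exact mem_ae_iff.2 hint

lemma ae_forall_mem_of_antitone_of_ergodic [IsFiniteMeasure ν] {f : α → α} (hf : Ergodic f ν)
    {A : ℕ → Set α} (hA : ∀ m, MeasurableSet (A m)) (hanti : Antitone A)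
    (hsub : ∀ m, A (m + 1) ⊆ f ⁻¹' A m) {c : ℝ≥0∞} (hc : c ≠ 0) (hcA : ∀ m, c ≤ ν (A m)) :
    ∀ᵐ p ∂ν, ∀ m, p ∈ A m := by
  have hlim := tendsto_measure_iInter_atTop (μ := ν) (fun m => (hA m).nullMeasurableSet) hanti
    ⟨0, measure_ne_top ν _⟩
  have hpos : c ≤ ν (⋂ m, A m) := ge_of_tendsto' hlim hcA
  have hinv : (⋂ m, A m) ⊆ f ⁻¹' ⋂ m, A m := fun p hp =>
    Set.mem_iInter.2 fun m => hsub m (Set.mem_iInter.1 hp (m + 1))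
  rcases hf.ae_empty_or_univ_of_ae_le_preimage (MeasurableSet.iInter hA).nullMeasurableSet
    hinv.eventuallyLE with hempty | huniv
  · exact absurd (le_zero_iff.1 (hpos.trans_eq (ae_eq_empty.1 hempty))) hc
  · filter_upwards [huniv.mem_iff] with p hp
    exact Set.mem_iInter.1 (hp.2 (Set.mem_univ p))

end ErgodicAverages

section SkewProduct

variable {Θ X M : Type*}

/-- The skew product `(θ, x) ↦ (T θ, F_θ x)` over the base transformation `T`. -/
def skewProduct (T : Θ → Θ) (F : Θ → X → X) (p : Θ × X) : Θ × X := (T p.1, F p.1 p.2)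

lemma semiconj_fst_skewProduct (T : Θ → Θ) (F : Θ → X → X) :
    Semiconj Prod.fst (skewProduct T F) T := fun _ => rfl

lemma measurable_birkhoffSum [MeasurableSpace X] {S : X → X} (hS : Measurable S) {g : X → ℝ}
    (hg : Measurable g) (n : ℕ) : Measurable (birkhoffSum S g n) :=
  Finset.measurable_fun_sum _ fun k _ => hg.comp (hS.iterate k)

lemma continuous_birkhoffSum_skewProduct [TopologicalSpace X] [TopologicalSpace M]
    [AddCommMonoid M] [ContinuousAdd M] (T : Θ → Θ) {F : Θ → X → X} (hF : ∀ θ, Continuous (F θ))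
    {g : Θ × X → M} (hg : ∀ θ, Continuous fun x => g (θ, x)) (n : ℕ) (θ : Θ) :
    Continuous fun x => birkhoffSum (skewProduct T F) g n (θ, x) := by
  induction n generalizing θ with
  | zero => exact continuous_const
  | succ n ih =>
    simp only [birkhoffSum_succ']
    exact (hg θ).add ((ih (T θ)).comp (hF θ))

lemma measurePreserving_base_of_skewProduct [MeasurableSpace Θ] [MeasurableSpace X] [Nonempty X]
    {ν : Measure Θ} [SFinite ν] {κ : Kernel Θ X} [IsMarkovKernel κ] {T : Θ → Θ} {F : Θ → X → X}
    (h : MeasurePreserving (skewProduct T F) (ν ⊗ₘ κ) (ν ⊗ₘ κ)) : MeasurePreserving T ν ν := by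
  have hfst : MeasurePreserving Prod.fst (ν ⊗ₘ κ) ν := ⟨measurable_fst, Measure.fst_compProd ν κ⟩
  have hT : Measurable T := (measurable_fst.comp h.measurable).comp
    (measurable_prodMk_right (y := Classical.arbitrary X))
  exact hfst.of_semiconj h (semiconj_fst_skewProduct T F) hT

/-- The fibred rotation number of a skew product with real fibres, required to exist in almost
every fibre only. -/
def HasFiberedRotationNumber [MeasurableSpace Θ] (ν : Measure Θ) (T : Θ → Θ) (F : Θ → ℝ → ℝ)
    (ρ : ℝ) : Prop :=
  ∀ᵐ θ ∂ν, ∀ x, Tendsto (fun n : ℕ => (((skewProduct T F)^[n] (θ, x)).2 - x) / n) atTop (𝓝 ρ)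

lemma HasRotNum.hasFiberedRotationNumber {ω : ℝ} {F : T1 → ℝ → ℝ} {ρ : ℝ} (h : HasRotNum ω F ρ) :
    HasFiberedRotationNumber volume (· + (ω : T1)) F ρ := by
  have hiter (n : ℕ) (θ : T1) (x : ℝ) :
      ((skewProduct (· + (ω : T1)) F)^[n] (θ, x)).2 = fiberIter ω F n θ x := by
    induction n generalizing θ x with
    | zero => rfl
    | succ _ ih => exact ih _ _
  exact .of_forall fun θ x => by simpa only [hiter] using h θ x

end SkewProduct

section LevelGain

variable {Θ : Type*} (T : Θ → Θ) (F H : Θ → ℝ → ℝ) (e : ℝ)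

/-- The increase of the level `H` caused by adding `e` after applying the fibre map `F`. -/
def levelGain (p : Θ × ℝ) : ℝ := H (T p.1) (F p.1 p.2 + e) - H (T p.1) (F p.1 p.2)

variable {T F H}

lemma measurable_levelGain [MeasurableSpace Θ] (hT : Measurable T)
    (hF : Measurable fun p : Θ × ℝ => F p.1 p.2) (hH : Measurable fun p : Θ × ℝ => H p.1 p.2) :
    Measurable (levelGain T F H e) := by
  have hT' : Measurable fun p : Θ × ℝ => T p.1 := hT.comp measurable_fst
  exact (hH.comp (hT'.prodMk (hF.add_const e))).sub (hH.comp (hT'.prodMk hF))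

lemma continuous_levelGain (hF : ∀ θ, Continuous (F θ)) (hH : ∀ θ, Continuous (H θ)) (θ : Θ) :
    Continuous fun x => levelGain T F H e (θ, x) :=
  ((hH (T θ)).comp ((hF θ).add_const e)).sub ((hH (T θ)).comp (hF θ))

lemma abs_levelGain (hH : ∀ θ, Monotone (H θ)) (p : Θ × ℝ) :
    |levelGain T F H e p| = SignType.sign e * levelGain T F H e p := by
  unfold levelGain
  rcases lt_trichotomy e 0 with he | rfl | he
  · have hle : F p.1 p.2 + e ≤ F p.1 p.2 := by linarith
    rw [abs_of_nonpos (sub_nonpos.2 (hH _ hle)), sign_neg he]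
    simp
  · simp
  · have hle : F p.1 p.2 ≤ F p.1 p.2 + e := by linarith
    rw [abs_of_nonneg (sub_nonneg.2 (hH _ hle)), sign_pos he]
    simp

lemma birkhoffSum_levelGain
    (hequiv : ∀ θ x y, H (T θ) (F θ x) - H (T θ) (F θ y) = H θ x - H θ y) (n : ℕ) (p : Θ × ℝ) :
    birkhoffSum (skewProduct T fun θ x => F θ x + e) (levelGain T F H e) n p =
      H (T^[n] p.1) ((skewProduct T fun θ x => F θ x + e)^[n] p).2 -
        H (T^[n] p.1) ((skewProduct T F)^[n] p).2 := by
  induction n with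
  | zero => simp
  | succ n ih =>
    have hfst (F' : Θ → ℝ → ℝ) : ((skewProduct T F')^[n] p).1 = T^[n] p.1 :=
      ((semiconj_fst_skewProduct T F').iterate_right n).eq p
    rw [birkhoffSum_succ, ih]
    simp only [iterate_succ_apply', levelGain, skewProduct, hfst]
    linarith [hequiv (T^[n] p.1) ((skewProduct T fun θ x => F θ x + e)^[n] p).2
      ((skewProduct T F)^[n] p).2]

lemma tendsto_birkhoffAverage_levelGain
    (hequiv : ∀ θ x y, H (T θ) (F θ x) - H (T θ) (F θ y) = H θ x - H θ y) {C : ℝ}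
    (hC : ∀ θ x, |H θ x - x| ≤ C) {p : Θ × ℝ} {ρ₀ ρ : ℝ}
    (hρ₀ : Tendsto (fun n : ℕ => (((skewProduct T F)^[n] p).2 - p.2) / n) atTop (𝓝 ρ₀))
    (hρ : Tendsto (fun n : ℕ =>
      (((skewProduct T fun θ x => F θ x + e)^[n] p).2 - p.2) / n) atTop (𝓝 ρ)) :
    Tendsto (birkhoffAverage ℝ (skewProduct T fun θ x => F θ x + e) (levelGain T F H e) · p)
      atTop (𝓝 (ρ - ρ₀)) := by
  set y : ℕ → ℝ := fun n => ((skewProduct T fun θ x => F θ x + e)^[n] p).2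
  set x : ℕ → ℝ := fun n => ((skewProduct T F)^[n] p).2
  set u : ℕ → ℝ := fun n => (H (T^[n] p.1) (y n) - y n) - (H (T^[n] p.1) (x n) - x n) with hu
  have hbound (n : ℕ) : |u n| ≤ C + C := (abs_sub _ _).trans (add_le_add (hC _ _) (hC _ _))
  have herr : Tendsto (fun n : ℕ => u n / n) atTop (𝓝 0) :=
    tendsto_bdd_div_atTop_nhds_zero (.of_forall fun n => (abs_le.1 (hbound n)).1)
      (.of_forall fun n => (abs_le.1 (hbound n)).2) tendsto_natCast_atTop_atTop
  have hlim := (hρ.sub hρ₀).add herr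
  rw [add_zero] at hlim
  refine hlim.congr fun n => ?_
  rw [birkhoffAverage, birkhoffSum_levelGain e hequiv, smul_eq_mul, ← sub_div, ← add_div,
    div_eq_inv_mul]
  congr 1
  simp only [hu]
  ring

lemma tendsto_birkhoffAverage_abs_levelGain (hH : ∀ θ, Monotone (H θ))
    (hequiv : ∀ θ x y, H (T θ) (F θ x) - H (T θ) (F θ y) = H θ x - H θ y) {C : ℝ}
    (hC : ∀ θ x, |H θ x - x| ≤ C) {p : Θ × ℝ} {ρ₀ ρ : ℝ}
    (hρ₀ : Tendsto (fun n : ℕ => (((skewProduct T F)^[n] p).2 - p.2) / n) atTop (𝓝 ρ₀))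
    (hρ : Tendsto (fun n : ℕ =>
      (((skewProduct T fun θ x => F θ x + e)^[n] p).2 - p.2) / n) atTop (𝓝 ρ)) :
    Tendsto (birkhoffAverage ℝ (skewProduct T fun θ x => F θ x + e) (|levelGain T F H e ·|) · p)
      atTop (𝓝 (SignType.sign e * (ρ - ρ₀))) := by
  refine ((tendsto_birkhoffAverage_levelGain e hequiv hC hρ₀ hρ).const_mul _).congr fun n => ?_
  simp only [birkhoffAverage, birkhoffSum, abs_levelGain e hH, smul_eq_mul, Finset.mul_sum,
    mul_left_comm]

end LevelGain

section LevelShadow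

variable {Θ : Type*}

/-- The points of the circle bundle lying above some `z` whose level `H_θ z` is attained up to an
error by a point `y` of the same fibre, the sum of this error and the cost `G (θ, y)` being less
than `t`. -/
def levelShadow (H : Θ → ℝ → ℝ) (G : Θ × ℝ → ℝ) (t : ℝ) : Set (Θ × T1) :=
  {p | ∃ y z : ℝ, (z : T1) = p.2 ∧ |H p.1 y - H p.1 z| + G (p.1, y) < t}

lemma measurableSet_levelShadow [MeasurableSpace Θ] {H : Θ → ℝ → ℝ}
    (hH : Measurable fun p : Θ × ℝ => H p.1 p.2) (hHc : ∀ θ, Continuous (H θ)) {G : Θ × ℝ → ℝ}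
    (hG : Measurable G) (hGc : ∀ θ, Continuous fun y => G (θ, y)) (t : ℝ) :
    MeasurableSet (levelShadow H G t) := by
  have heq : levelShadow H G t = ⋃ n : ℤ, {p : Θ × T1 |
      ∃ y, |H p.1 y - H p.1 (unitRep p.2 + n)| + G (p.1, y) < t} := by
    ext ⟨θ, ξ⟩
    rw [Set.mem_iUnion]
    constructor
    · rintro ⟨y, z, hz, hlt⟩
      obtain ⟨n, rfl⟩ := coe_eq_coe_iff_exists_add_int.1 ((coe_unitRep ξ).trans hz.symm)
      exact ⟨n, y, hlt⟩
    · rintro ⟨n, y, hlt⟩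
      exact ⟨y, unitRep ξ + n,
        (coe_eq_coe_iff_exists_add_int.2 ⟨n, rfl⟩).symm.trans (coe_unitRep ξ), hlt⟩
  have hrep (n : ℤ) : Measurable fun p : Θ × T1 => H p.1 (unitRep p.2 + n) :=
    hH.comp (measurable_fst.prodMk ((measurable_unitRep.comp measurable_snd).add_const _))
  have hfst (y : ℝ) : Measurable fun p : Θ × T1 => (p.1, y) :=
    measurable_fst.prodMk measurable_const
  rw [heq]
  refine .iUnion fun n => measurableSet_exists_lt (fun y => ?_) (fun p => ?_) t
  · exact (((hH.comp (hfst y)).sub (hrep n)).abs).add (hG.comp (hfst y))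
  · exact (((hHc p.1).sub continuous_const).abs).add (hGc p.1)

lemma levelShadow_anti (H : Θ → ℝ → ℝ) {G G' : Θ × ℝ → ℝ} (hG : G ≤ G') (t : ℝ) :
    levelShadow H G' t ⊆ levelShadow H G t := by
  rintro p ⟨y, z, hz, hlt⟩
  exact ⟨y, z, hz, by linarith [hG (p.1, y)]⟩

lemma levelShadow_birkhoffSum_succ_subset {T : Θ → Θ} {F H : Θ → ℝ → ℝ}
    (hequiv : ∀ θ x y, H (T θ) (F θ x) - H (T θ) (F θ y) = H θ x - H θ y) {φ : Θ → T1 → T1}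
    (hφ : ∀ θ (x : ℝ), φ θ x = (F θ x : T1)) (e t : ℝ) (m : ℕ) :
    levelShadow H (birkhoffSum (skewProduct T fun θ x => F θ x + e)
        (|levelGain T F H e ·|) (m + 1)) t ⊆
      skewProduct T φ ⁻¹' levelShadow H (birkhoffSum (skewProduct T fun θ x => F θ x + e)
        (|levelGain T F H e ·|) m) t := by
  rintro ⟨θ, ξ⟩ ⟨y, z, rfl, hlt⟩
  refine ⟨F θ y + e, F θ z, (hφ θ z).symm, ?_⟩
  have htri : |H (T θ) (F θ y + e) - H (T θ) (F θ z)| ≤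
      |levelGain T F H e (θ, y)| + |H θ y - H θ z| := by
    rw [← hequiv θ y z]
    exact abs_sub_le (H (T θ) (F θ y + e)) (H (T θ) (F θ y)) (H (T θ) (F θ z))
  rw [birkhoffSum_succ'] at hlt
  dsimp only [skewProduct] at hlt ⊢
  linarith

lemma le_compProd_levelShadow [MeasurableSpace Θ] {ν : Measure Θ} [IsProbabilityMeasure ν]
    {κ : Kernel Θ T1} [IsMarkovKernel κ] [∀ θ, NullSingletonClass (κ θ)] {G : Θ × ℝ → ℝ} {t : ℝ}
    (ht : t < 1)
    (hmeas : MeasurableSet (levelShadow (fun θ => cdfLift (κ θ)) G t))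
    (hG : ∀ᵐ θ ∂ν, ∃ y, G (θ, y) < t / 2) :
    ENNReal.ofReal t ≤ (ν ⊗ₘ κ) (levelShadow (fun θ => cdfLift (κ θ)) G t) := by
  have hfibre : ∀ᵐ θ ∂ν, ENNReal.ofReal t ≤
      κ θ (Prod.mk θ ⁻¹' levelShadow (fun θ => cdfLift (κ θ)) G t) := by
    filter_upwards [hG] with θ ⟨y, hy⟩
    rw [← ofReal_measureReal]
    refine ENNReal.ofReal_le_ofReal ?_
    have harc := two_mul_le_measureReal_image_abs_cdfLift_sub_le (κ θ) (cdfLift (κ θ) y)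
      (t := t / 2) (by linarith)
    rw [mul_div_cancel₀ t two_ne_zero] at harc
    refine harc.trans (measureReal_mono ?_)
    rintro _ ⟨z, hz, rfl⟩
    rw [Set.mem_ofPred_eq, abs_sub_comm] at hz
    exact ⟨y, z, rfl, by linarith⟩
  calc ENNReal.ofReal t = ∫⁻ _, ENNReal.ofReal t ∂ν := by
        rw [lintegral_const, measure_univ, mul_one]
    _ ≤ ∫⁻ θ, κ θ (Prod.mk θ ⁻¹' levelShadow (fun θ => cdfLift (κ θ)) G t) ∂ν :=
      lintegral_mono_ae hfibre
    _ = _ := (Measure.compProd_apply hmeas).symm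

end LevelShadow

section GapCount

lemma exists_forall_lt_map_imp_le_map_add {ℓ : ℝ} (hℓ : 0 < ℓ) :
    ∃ δ : ℝ, 0 < δ ∧ δ < 1 ∧ ∀ h : CircleDeg1Lift, ∃ a, ∀ w,
      a - 2 * δ < h w → a + 2 * δ ≤ h (w + ℓ) := by
  obtain ⟨N, hN⟩ := exists_nat_gt (2 / ℓ)
  rw [div_lt_iff₀ hℓ] at hN
  have hN1 : (1 : ℝ) ≤ N := by
    have hne : N ≠ 0 := by
      rintro rfl
      simp only [Nat.cast_zero, zero_mul] at hN
      linarith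
    exact_mod_cast Nat.one_le_iff_ne_zero.2 hne
  have hδ : 4 * (1 / (4 * N) : ℝ) * N = 1 := by field_simp
  set δ : ℝ := 1 / (4 * N)
  refine ⟨δ, by positivity, by nlinarith, fun h => ?_⟩
  by_contra! hgap
  choose w hlo hhi using hgap
  -- The points `w (4 * δ * j)`, `j ≤ N`, advance by more than `2`, their levels by less than `2`.
  have hstep (j : ℕ) : w (4 * δ * j) + ℓ ≤ w (4 * δ * (j + 1 : ℕ)) := by
    refine (h.monotone.reflect_lt ((hhi _).trans_eq ?_ |>.trans (hlo _))).le
    push_cast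
    ring
  have hsum (j : ℕ) : w 0 + j * ℓ ≤ w (4 * δ * j) := by
    induction j with
    | zero => simp
    | succ j ih =>
      refine le_trans ?_ (hstep j)
      push_cast
      linarith
  have hturn : h (w 0) + 2 ≤ h (w (4 * δ * N)) := by
    have hmap := h.map_add_nat (w 0) 2
    push_cast at hmap
    rw [← hmap]
    exact h.monotone (by linarith [hsum N])
  have hstart := hlo 0
  have hend := (h.monotone (le_add_of_nonneg_right hℓ.le)).trans_lt (hhi (4 * δ * N))
  nlinarith

lemma exists_forall_abs_sub_lt_imp_le_abs_map_add_sub {e : ℝ} (he : e ≠ 0) :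
    ∃ δ : ℝ, 0 < δ ∧ δ < 1 ∧ ∀ h : CircleDeg1Lift, ∃ a, ∀ (z : ℝ) (n : ℤ),
      |h z - (a + n)| < δ → δ ≤ |h (z + e) - h z| := by
  obtain ⟨δ, hδ, hδ1, hgap⟩ := exists_forall_lt_map_imp_le_map_add (abs_pos.2 he)
  refine ⟨δ, hδ, hδ1, fun h => ?_⟩
  obtain ⟨a, ha⟩ := hgap h
  refine ⟨a, fun z n hz => not_lt.1 fun hze => ?_⟩
  obtain ⟨hz1, hz2⟩ := abs_lt.1 hz
  obtain ⟨hze1, hze2⟩ := abs_lt.1 hze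
  rcases he.lt_or_gt with he | he
  · have hw := ha (z + e - n) (by rw [h.map_sub_int]; linarith)
    rw [abs_of_neg he, add_sub_right_comm, add_neg_cancel_right, h.map_sub_int] at hw
    linarith
  · have hw := ha (z - n) (by rw [h.map_sub_int]; linarith)
    rw [abs_of_pos he, sub_add_eq_add_sub, h.map_sub_int] at hw
    linarith

end GapCount

section Main

variable {Θ : Type*} [MeasurableSpace Θ] {ν : Measure Θ} {T : Θ → Θ} {F : Θ → CircleDeg1Lift}
  {φ : Θ → T1 → T1} {κ : Kernel Θ T1} [IsMarkovKernel κ] [∀ θ, NullSingletonClass (κ θ)] {e : ℝ}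

lemma exists_forall_not_ae_mem_levelShadow (he : e ≠ 0) (hFc : ∀ θ, Continuous (F θ))
    (hequiv : ∀ θ x y, cdfLift (κ (T θ)) (F θ x) - cdfLift (κ (T θ)) (F θ y) =
      cdfLift (κ θ) x - cdfLift (κ θ) y) :
    ∃ t : ℝ, 0 < t ∧ t < 1 ∧ ∀ θ, ¬ ∀ᵐ ξ ∂κ θ, (θ, ξ) ∈ levelShadow (fun θ => cdfLift (κ θ))
      (|levelGain T (fun θ => F θ) (fun θ => cdfLift (κ θ)) e ·|) t := by
  obtain ⟨δ, hδ, hδ1, hgap⟩ := exists_forall_abs_sub_lt_imp_le_abs_map_add_sub he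
  refine ⟨δ / 2, half_pos hδ, by linarith, fun θ hae => ?_⟩
  obtain ⟨a, ha⟩ := hgap (cdfLift (κ (T θ)))
  obtain ⟨v, rfl⟩ :=
    (cdfLift (κ (T θ))).continuous_iff_surjective.1 (continuous_cdfLift (κ (T θ))) a
  obtain ⟨w, rfl⟩ := (F θ).continuous_iff_surjective.1 (hFc θ) v
  obtain ⟨z, hzw, y, z', hz', hlt⟩ := exists_abs_cdfLift_sub_le_of_ae (κ θ) hae
    (cdfLift (κ θ) w) (half_pos hδ) (by linarith)
  obtain ⟨n, rfl⟩ := coe_eq_coe_iff_exists_add_int.1 hz'.symm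
  dsimp only [levelGain] at hlt
  rw [(cdfLift (κ θ)).map_add_int] at hlt
  have hlevel : |cdfLift (κ (T θ)) (F θ y) - (cdfLift (κ (T θ)) (F θ w) + n)| ≤
      |cdfLift (κ θ) y - (cdfLift (κ θ) z + n)| + |cdfLift (κ θ) z - cdfLift (κ θ) w| := by
    rw [← sub_sub, hequiv]
    refine le_of_eq_of_le (congrArg _ ?_) (abs_add_le _ _)
    ring
  have hgain := abs_nonneg (cdfLift (κ (T θ)) (F θ y + e) - cdfLift (κ (T θ)) (F θ y))
  have hnear := abs_nonneg (cdfLift (κ θ) y - (cdfLift (κ θ) z + n))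
  linarith [ha (F θ y) n (by linarith)]

lemma ae_mem_levelShadow [IsProbabilityMeasure ν] (hT : MeasurePreserving T ν ν)
    (hFm : Measurable fun p : Θ × ℝ => F p.1 p.2) (hFc : ∀ θ, Continuous (F θ))
    (hφ : ∀ θ (x : ℝ), φ θ x = (F θ x : T1))
    (hequiv : ∀ θ x y, cdfLift (κ (T θ)) (F θ x) - cdfLift (κ (T θ)) (F θ y) =
      cdfLift (κ θ) x - cdfLift (κ θ) y)
    (herg : Ergodic (skewProduct T φ) (ν ⊗ₘ κ))
    (havg : ∀ᵐ θ ∂ν, Tendsto (birkhoffAverage ℝ (skewProduct T fun θ x => F θ x + e)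
      (|levelGain T (fun θ => F θ) (fun θ => cdfLift (κ θ)) e ·|) · (θ, 0)) atTop (𝓝 0))
    {t : ℝ} (ht : 0 < t) (ht' : t < 1) :
    ∀ᵐ p ∂ν ⊗ₘ κ, p ∈ levelShadow (fun θ => cdfLift (κ θ))
      (|levelGain T (fun θ => F θ) (fun θ => cdfLift (κ θ)) e ·|) t := by
  set H : Θ → ℝ → ℝ := fun θ => cdfLift (κ θ)
  set S : Θ × ℝ → Θ × ℝ := skewProduct T fun θ x => F θ x + e
  set g : Θ × ℝ → ℝ := (|levelGain T (fun θ => F θ) H e ·|)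
  have hHm : Measurable fun p : Θ × ℝ => H p.1 p.2 := measurable_cdfLift κ
  have hHc (θ : Θ) : Continuous (H θ) := continuous_cdfLift (κ θ)
  have hGm (m : ℕ) : Measurable (birkhoffSum S g m) :=
    measurable_birkhoffSum ((hT.measurable.comp measurable_fst).prodMk (hFm.add_const e))
      (measurable_levelGain e hT.measurable hFm hHm).abs m
  have hGc (m : ℕ) (θ : Θ) : Continuous fun y => birkhoffSum S g m (θ, y) :=
    continuous_birkhoffSum_skewProduct T (fun θ => (hFc θ).add_const e)
      (fun θ => (continuous_levelGain e hFc hHc θ).abs) m θ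
  have hmeas (m : ℕ) : MeasurableSet (levelShadow H (birkhoffSum S g m) t) :=
    measurableSet_levelShadow hHm hHc (hGm m) (hGc m) t
  have hsmall (m : ℕ) : ∀ᵐ θ ∂ν, ∃ y, birkhoffSum S g m (θ, y) < t / 2 := by
    refine ae_exists_lt_of_tendsto_birkhoffAverage (S := S^[m]) (g := birkhoffSum S g m)
      (hT.iterate m)
      ((semiconj_fst_skewProduct T _).iterate_right m)
      (fun p => Finset.sum_nonneg fun k _ => abs_nonneg _) (half_pos ht)
      (measurableSet_exists_lt (fun y => (hGm m).comp measurable_prodMk_right) (hGc m) _)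
      (x₀ := 0) ?_
    filter_upwards [havg] with θ hθ
    simpa only [mul_zero] using tendsto_birkhoffAverage_iterate_birkhoffSum hθ m
  have hanti : Antitone fun m => levelShadow H (birkhoffSum S g m) t :=
    antitone_nat_of_succ_le fun m => levelShadow_anti H (fun p => by
      rw [birkhoffSum_succ]
      exact le_add_of_nonneg_right (abs_nonneg _)) t
  filter_upwards [ae_forall_mem_of_antitone_of_ergodic herg hmeas hanti
    (levelShadow_birkhoffSum_succ_subset hequiv hφ e t) (ENNReal.ofReal_pos.2 ht).ne' fun m =>
      le_compProd_levelShadow ht' (hmeas m) (hsmall m)] with p hp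
  simpa only [birkhoffSum_one'] using hp 1

theorem mul_rotationNumber_sub_pos [IsProbabilityMeasure ν]
    (hFm : Measurable fun p : Θ × ℝ => F p.1 p.2) (hFc : ∀ θ, Continuous (F θ))
    (hFmono : ∀ θ, StrictMono (F θ)) (hφ : ∀ θ (x : ℝ), φ θ x = (F θ x : T1))
    (hpush : ∀ θ, (κ θ).map (φ θ) = κ (T θ)) (herg : Ergodic (skewProduct T φ) (ν ⊗ₘ κ))
    {ρ₀ ρ : ℝ} (hρ₀ : HasFiberedRotationNumber ν T (fun θ => F θ) ρ₀) (he : e ≠ 0)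
    (hρ : HasFiberedRotationNumber ν T (fun θ x => F θ x + e) ρ) : 0 < e * (ρ - ρ₀) := by
  have hT : MeasurePreserving T ν ν :=
    measurePreserving_base_of_skewProduct herg.toMeasurePreserving
  have hequiv (θ : Θ) (x y : ℝ) : cdfLift (κ (T θ)) (F θ x) - cdfLift (κ (T θ)) (F θ y) =
      cdfLift (κ θ) x - cdfLift (κ θ) y :=
    cdfLift_map_sub_cdfLift_map (κ θ) (hFmono θ) (hφ θ) (hpush θ) x y
  have havg : ∀ᵐ θ ∂ν, Tendsto (birkhoffAverage ℝ (skewProduct T fun θ x => F θ x + e)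
      (|levelGain T (fun θ => F θ) (fun θ => cdfLift (κ θ)) e ·|) · (θ, 0)) atTop
        (𝓝 (SignType.sign e * (ρ - ρ₀))) := by
    filter_upwards [hρ₀, hρ] with θ h₀ h
    exact tendsto_birkhoffAverage_abs_levelGain e (fun θ => (cdfLift (κ θ)).monotone) hequiv
      (fun θ => abs_cdfLift_sub_le (κ θ)) (h₀ 0) (h 0)
  have hnonneg : 0 ≤ SignType.sign e * (ρ - ρ₀) := by
    obtain ⟨θ, hθ⟩ := havg.exists
    exact ge_of_tendsto' hθ fun n => mul_nonneg (by positivity)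
      (Finset.sum_nonneg fun k _ => abs_nonneg _)
  have hne : ρ - ρ₀ ≠ 0 := fun hzero => by
    obtain ⟨t, ht, ht', hnot⟩ := exists_forall_not_ae_mem_levelShadow he hFc hequiv
    rw [hzero, mul_zero] at havg
    obtain ⟨θ, hθ⟩ := (Measure.ae_ae_of_ae_compProd
      (ae_mem_levelShadow hT hFm hFc hφ hequiv herg havg ht ht')).exists
    exact hnot θ hθ
  have hsign : e * (ρ - ρ₀) = |e| * (SignType.sign e * (ρ - ρ₀)) := by
    rw [← mul_assoc, abs_mul_sign]
  exact (hsign ▸ mul_nonneg (abs_nonneg e) hnonneg).lt_of_ne (mul_ne_zero he hne).symm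

theorem continuous_fiber_measures_strictly_monotone_general [IsProbabilityMeasure ν]
    (hFm : Measurable fun p : Θ × ℝ => F p.1 p.2) (hFc : ∀ θ, Continuous (F θ))
    (hFmono : ∀ θ, StrictMono (F θ)) (f : Θ × T1 → Θ × T1)
    (hproj : ∀ θ (x : ℝ), f (θ, (x : T1)) = (T θ, (F θ x : T1)))
    {ρ₀ : ℝ} (hρ : HasFiberedRotationNumber ν T (fun θ => F θ) ρ₀)
    (μ : Measure (Θ × T1)) (herg : Ergodic f μ) (μθ : Θ → Measure T1)
    (hθprob : ∀ θ, IsProbabilityMeasure (μθ θ)) (hatomless : ∀ θ x, μθ θ {x} = 0)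
    (hmeas : ∀ B : Set T1, MeasurableSet B → Measurable fun θ => μθ θ B)
    (hdisint : ∀ A : Set (Θ × T1), MeasurableSet A → μ A = ∫⁻ θ, μθ θ {x : T1 | (θ, x) ∈ A} ∂ν)
    (hpush : ∀ θ, (μθ θ).map (fun x => (f (θ, x)).2) = μθ (T θ)) {ε : ℝ} (hε : 0 < ε)
    {ρp : ℝ} (hρp : HasFiberedRotationNumber ν T (fun θ x => F θ x + ε) ρp)
    {ρm : ℝ} (hρm : HasFiberedRotationNumber ν T (fun θ x => F θ x + -ε) ρm) :
    ρm < ρ₀ ∧ ρ₀ < ρp := by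
  let κ : Kernel Θ T1 := ⟨μθ, Measure.measurable_of_measurable_coe _ hmeas⟩
  have : IsMarkovKernel κ := ⟨hθprob⟩
  have (θ : Θ) : NullSingletonClass (κ θ) := ⟨hatomless θ⟩
  have hμ : μ = ν ⊗ₘ κ :=
    Measure.ext fun A hA => (hdisint A hA).trans (Measure.compProd_apply (κ := κ) hA).symm
  have hf : f = skewProduct T fun θ x => (f (θ, x)).2 := by
    ext1 ⟨θ, ξ⟩
    rw [← coe_unitRep ξ, skewProduct, hproj]
  have hφ (θ : Θ) (x : ℝ) : (f (θ, x)).2 = (F θ x : T1) := congrArg Prod.snd (hproj θ x)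
  rw [hμ, hf] at herg
  have hgap {e ρ : ℝ} (he : e ≠ 0)
      (hρe : HasFiberedRotationNumber ν T (fun θ x => F θ x + e) ρ) : 0 < e * (ρ - ρ₀) :=
    mul_rotationNumber_sub_pos hFm hFc hFmono hφ hpush herg hρ he hρe
  have hm := hgap (neg_ne_zero.2 hε.ne') hρm
  have hp := hgap hε.ne' hρp
  exact ⟨by nlinarith, by nlinarith⟩

end Main

/-- The lift of a circle homeomorphism in the fibre over `θ`. -/
def IsQpfLift.fiberLift {ω : ℝ} {F : T1 → ℝ → ℝ} (hF : IsQpfLift ω F) (θ : T1) :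
    CircleDeg1Lift := ⟨⟨F θ, (hF.mono θ).monotone⟩, hF.per θ⟩

/-- Lemma 3.2: if `f` has an ergodic invariant probability measure with
atomless fiber measures, then the fibered rotation number is strictly monotone at `f`. -/
theorem continuous_fiber_measures_strictly_monotone
    (ω : ℝ) (hω : Irrational ω)
    (F : T1 → ℝ → ℝ) (hF : IsQpfLift ω F)
    (f : T1 × T1 → T1 × T1) (hfc : Continuous f)
    (hproj : ∀ (θ : T1) (x : ℝ), f (θ, (x : T1)) = (θ + (ω : T1), ((F θ x : ℝ) : T1)))
    (ρ₀ : ℝ) (hρ : HasRotNum ω F ρ₀)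
    (μ : Measure (T1 × T1)) (hprob : IsProbabilityMeasure μ) (herg : Ergodic f μ)
    (μθ : T1 → Measure T1)
    (hθprob : ∀ θ, IsProbabilityMeasure (μθ θ))
    (hatomless : ∀ (θ : T1) (x : T1), μθ θ {x} = 0)
    (hmeas : ∀ B : Set T1, MeasurableSet B → Measurable fun θ => μθ θ B)
    (hdisint : ∀ A : Set (T1 × T1), MeasurableSet A →
      μ A = ∫⁻ θ, μθ θ {x : T1 | (θ, x) ∈ A})
    (hpush : ∀ θ : T1, (μθ θ).map (fun x => (f (θ, x)).2) = μθ (θ + (ω : T1)))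
    (ε : ℝ) (hε : 0 < ε)
    (ρp : ℝ) (hρp : HasRotNum ω (fun θ x => F θ x + ε) ρp)
    (ρm : ℝ) (hρm : HasRotNum ω (fun θ x => F θ x + (-ε)) ρm) :
    ρm < ρ₀ ∧ ρ₀ < ρp := by
  have : IsProbabilityMeasure (volume : Measure T1) := ⟨UnitAddCircle.measure_univ⟩
  exact continuous_fiber_measures_strictly_monotone_general (F := hF.fiberLift)
    hF.cont.measurable (fun θ => hF.cont.comp (.prodMk_right θ)) hF.mono f hproj
    hρ.hasFiberedRotationNumber μ herg μθ hθprob hatomless hmeas hdisint hpush hε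
    hρp.hasFiberedRotationNumber hρm.hasFiberedRotationNumber
end
end

section
/- Let f be a quasiperiodically forced circle homeomorphism over an irrational ω with lift F whose fibered rotation number is ρ₀. Suppose f is semi-conjugate to the irrational torus translation R(θ,x) := (θ+ω, x+ρ): there is a continuous surjective map h : T¹×T¹ → T¹×T¹ with π₁∘h = π₁ and h∘f = R∘h, whose fiber maps h_θ are monotone circle maps of degree one (h admits a lift H(θ,x) = (θ, H_θ(x)) with each H_θ : ℝ → ℝ continuous, nondecreasing and H_θ(x+1) = H_θ(x)+1), and assume ω, ρ and 1 are rationally independent (no (a,b,c) ∈ ℤ³ \ {(0,0,0)} with aω + bρ + c = 0). Then for every ε > 0, if ρ₊ is the fibered rotation number of F_ε and ρ₋ that of F_{−ε}, one has ρ₋ < ρ₀ < ρ₊. -/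
open Filter Topology MeasureTheory
open scoped ENNReal

noncomputable section

/-!
Measure, in the coordinate `H`, how far the orbit of `F + ε` is ahead of the orbit of `F`. The
semiconjugacy makes `F` preserve `H`-distances within a fiber, so this lead changes only through the
perturbations, each contributing `H_θ(z + ε) - H_θ(z) ≥ 0` at the current point `z`. On a single
fiber, some value `t` of `H_θ` is attained only at points `z` where this contribution exceeds a
constant, and by compactness the same holds, uniformly, for values in an open set `U` of the target
torus. As long as the lead has not grown, the image of the perturbed orbit in the target shadows an
orbit of the translation by `(ω, ρ)`; these are dense by Kronecker's theorem and hence visit `U`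
within a uniformly bounded time. So the lead grows at least linearly, and a monotone degree-one map
changes distances by at most `1`. The lower inequality follows by conjugating with `x ↦ -x`.

Kronecker's theorem is obtained from unique ergodicity: the nontrivial Fourier coefficients of an
invariant measure vanish, so Haar measure is extreme among the invariant measures, hence ergodic.
-/

open UnitAddTorus BoundedContinuousFunction

section Kronecker

variable {d : Type*} [Fintype d]

lemma mFourier_apply_add (n : d → ℤ) (x y : UnitAddTorus d) :
    mFourier n (x + y) = mFourier n x * mFourier n y := by
  simp only [mFourier, ContinuousMap.coe_mk, Pi.add_apply, fourier_apply, smul_add,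
    AddCircle.toCircle_add, Circle.coe_mul, Finset.prod_mul_distrib]

lemma mFourier_apply_coe (n : d → ℤ) (v : d → ℝ) :
    mFourier n (fun i ↦ (v i : UnitAddCircle)) =
      Complex.exp ((∑ i, (n i : ℝ) * v i : ℝ) * (2 * Real.pi * Complex.I)) := by
  simp only [mFourier, ContinuousMap.coe_mk, fourier_coe_apply, ← Complex.exp_sum]
  congr 1
  push_cast
  rw [Finset.sum_mul]
  exact Finset.sum_congr rfl fun i _ ↦ by ring

lemma mFourier_apply_coe_eq_one_iff (n : d → ℤ) (v : d → ℝ) :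
    mFourier n (fun i ↦ (v i : UnitAddCircle)) = 1 ↔ ∃ m : ℤ, ∑ i, (n i : ℝ) * v i = m := by
  rw [mFourier_apply_coe, Complex.exp_eq_one_iff]
  simp only [mul_left_inj' Complex.two_pi_I_ne_zero]
  norm_cast

lemma measure_ext_of_integral_mFourier {μ ν : Measure (UnitAddTorus d)} [IsFiniteMeasure μ]
    [IsFiniteMeasure ν] (h : ∀ n : d → ℤ, ∫ x, mFourier n x ∂μ = ∫ x, mFourier n x ∂ν) :
    μ = ν := by
  have integrable (κ : Measure (UnitAddTorus d)) [IsFiniteMeasure κ]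
      (φ : C(UnitAddTorus d, ℂ)) : Integrable φ κ :=
    φ.continuous.integrable_of_hasCompactSupport (.of_compactSpace _)
  have span_eq (φ : C(UnitAddTorus d, ℂ)) (hφ : φ ∈ Submodule.span ℂ (Set.range mFourier)) :
      ∫ x, φ x ∂μ = ∫ x, φ x ∂ν := by
    induction hφ using Submodule.span_induction with
    | mem φ hφ => obtain ⟨n, rfl⟩ := hφ; exact h n
    | zero => simp only [ContinuousMap.zero_apply, integral_zero]
    | add φ ψ _ _ hφ hψ =>
      simp only [ContinuousMap.add_apply]
      rw [integral_add (integrable μ φ) (integrable μ ψ),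
        integral_add (integrable ν φ) (integrable ν ψ), hφ, hψ]
    | smul c φ _ hφ => simp only [ContinuousMap.smul_apply, integral_smul, hφ]
  refine ext_of_forall_mem_subalgebra_integral_eq_of_polish
    (A := (mFourierSubalgebra d).comap (toContinuousMapStarₐ ℂ)) ?_ fun φ hφ ↦ ?_
  · intro x y hxy
    obtain ⟨_, ⟨φ, hφ, rfl⟩, hne⟩ := mFourierSubalgebra_separatesPoints hxy
    exact ⟨φ, ⟨φ, ⟨mkOfCompact φ, hφ, rfl⟩, rfl⟩, hne⟩
  · refine span_eq (toContinuousMapStarₐ ℂ φ) ?_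
    rw [← mFourierSubalgebra_coe]
    exact hφ

lemma integral_mFourier_eq_zero {μ : Measure (UnitAddTorus d)} {g : UnitAddTorus d}
    (hμ : MeasurePreserving (g + ·) μ μ) {n : d → ℤ} (hn : mFourier n g ≠ 1) :
    ∫ x, mFourier n x ∂μ = 0 := by
  have hinv : mFourier n g * ∫ x, mFourier n x ∂μ = ∫ x, mFourier n x ∂μ := by
    rw [← integral_const_mul]
    simpa only [mFourier_apply_add] using
      hμ.integral_comp (measurableEmbedding_addLeft g) (mFourier n)
  exact (mul_left_eq_self₀.1 hinv).resolve_left hn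

lemma measure_eq_of_measurePreserving_add_left {g : UnitAddTorus d}
    (hg : ∀ n : d → ℤ, n ≠ 0 → mFourier n g ≠ 1) {μ ν : Measure (UnitAddTorus d)}
    [IsFiniteMeasure μ] [IsFiniteMeasure ν] (hμ : MeasurePreserving (g + ·) μ μ)
    (hν : MeasurePreserving (g + ·) ν ν) (hμν : μ Set.univ = ν Set.univ) : μ = ν := by
  refine measure_ext_of_integral_mFourier fun n ↦ ?_
  obtain rfl | hn := eq_or_ne n 0
  · simp only [mFourier_zero, ContinuousMap.one_apply, integral_const, Measure.real, hμν]
  · rw [integral_mFourier_eq_zero hμ (hg n hn), integral_mFourier_eq_zero hν (hg n hn)]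

lemma ergodic_add_left_of_mFourier_ne_one {g : UnitAddTorus d}
    (hg : ∀ n : d → ℤ, n ≠ 0 → mFourier n g ≠ 1) {μ : Measure (UnitAddTorus d)}
    [IsFiniteMeasure μ] (hμ : MeasurePreserving (g + ·) μ μ) : Ergodic (g + ·) μ := by
  refine .of_mem_extremePoints_measure_univ_eq (measure_ne_top μ Set.univ)
    ⟨⟨hμ, rfl⟩, fun ν ⟨hν, hνμ⟩ _ _ _ ↦ ?_⟩
  have : IsFiniteMeasure ν := ⟨hνμ ▸ measure_lt_top μ Set.univ⟩
  exact measure_eq_of_measurePreserving_add_left hg hν hμ hνμ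

theorem denseRange_zsmul_coe_of_rat_independent {v : d → ℝ}
    (hv : ∀ (n : d → ℤ) (m : ℤ), ∑ i, (n i : ℝ) * v i = m → n = 0) :
    DenseRange fun k : ℤ ↦ k • (fun i ↦ (v i : UnitAddCircle) : UnitAddTorus d) := by
  refine .zsmul_of_ergodic_add_left (μ := (volume : Measure (UnitAddTorus d))) <|
    ergodic_add_left_of_mFourier_ne_one (fun n hn h ↦ hn ?_)
      (measurePreserving_add_left volume _)
  obtain ⟨m, hm⟩ := (mFourier_apply_coe_eq_one_iff n v).1 h
  exact hv n m hm

lemma denseRange_zsmul_prod_of_rat_independent {ω ρ : ℝ}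
    (hind : ∀ a b c : ℤ, (a : ℝ) * ω + (b : ℝ) * ρ + (c : ℝ) = 0 → a = 0 ∧ b = 0 ∧ c = 0) :
    DenseRange fun k : ℤ ↦ k • ((ω, ρ) : T1 × T1) := by
  have hdense := denseRange_zsmul_coe_of_rat_independent (v := ![ω, ρ]) fun n m hnm ↦ by
    rw [Fin.sum_univ_two] at hnm
    obtain ⟨h0, h1, -⟩ := hind (n 0) (n 1) (-m) (by
      push_cast
      exact add_neg_eq_zero.2 hnm)
    exact funext (Fin.forall_fin_two.2 ⟨h0, h1⟩)
  have hcoords : Function.Surjective fun x : UnitAddTorus (Fin 2) ↦ (x 0, x 1) :=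
    fun p ↦ ⟨![p.1, p.2], rfl⟩
  exact hcoords.denseRange.comp hdense (by fun_prop)

end Kronecker

section Recurrence

variable {A : Type*} [TopologicalSpace A] [AddCommGroup A] [IsTopologicalAddGroup A]
  [CompactSpace A] {g : A} {U : Set A}

lemma exists_uniform_hitting_time (hg : DenseRange fun k : ℤ ↦ k • g) (hU : IsOpen U)
    (hne : U.Nonempty) : ∃ N : ℕ, ∀ a : A, ∃ j < N, a + j • g ∈ U := by
  have hits (a : A) : ∃ j : ℕ, a + j • g ∈ U :=
    (denseRange_zsmul_iff_nsmul.1 hg).exists_mem_open (hU.preimage (continuous_const_add a))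
      (hne.preimage (add_left_surjective a))
  obtain ⟨s, hs⟩ := isCompact_univ.elim_finite_subcover (fun j : ℕ ↦ (· + j • g) ⁻¹' U)
    (fun j ↦ hU.preimage (continuous_add_const _)) fun a _ ↦ Set.mem_iUnion.2 (hits a)
  refine ⟨s.sup id + 1, fun a ↦ ?_⟩
  obtain ⟨j, hj, haj⟩ := Set.mem_iUnion₂.1 (hs (Set.mem_univ a))
  exact ⟨j, Nat.lt_succ_of_le (Finset.le_sup (f := id) hj), haj⟩

-- Until `u` has grown by a fixed amount the perturbed orbit shadows a pure translation orbit, and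
-- that one meets `U` within a bounded time.
lemma exists_uniform_growth (hg : DenseRange fun k : ℤ ↦ k • g) (hU : IsOpen U)
    (hne : U.Nonempty) (ι : ℝ →ₜ+ A) {δ : ℝ} (hδ : 0 < δ) :
    ∃ c > 0, ∃ N : ℕ, ∀ (a : A) (u : ℕ → ℝ), Monotone u →
      (∀ n, a + n • g + ι (u n) ∈ U → u n + δ ≤ u (n + 1)) → ∀ n, u n + c ≤ u (n + N) := by
  obtain ⟨q, hq⟩ := hne
  have hnear : ∀ᶠ p : A × ℝ in 𝓝 q ×ˢ 𝓝 0, p.1 + ι p.2 ∈ U := by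
    rw [← nhds_prod_eq]
    have hcont : Continuous fun p : A × ℝ ↦ p.1 + ι p.2 := by fun_prop
    exact hcont.continuousAt.eventually_mem (hU.mem_nhds (by simpa using hq))
  obtain ⟨V, hV, W, hW, hVW⟩ := eventually_prod_iff.1 hnear
  obtain ⟨V', hV'V, hV', hqV'⟩ := eventually_nhds_iff.1 hV
  obtain ⟨r, hr, hrW⟩ := Metric.eventually_nhds_iff.1 hW
  obtain ⟨N, hN⟩ := exists_uniform_hitting_time hg hV' ⟨q, hqV'⟩
  refine ⟨min r δ, lt_min hr hδ, N, fun a u hu hgrow n ↦ ?_⟩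
  obtain ⟨j, hj, hjV⟩ := hN (a + n • g + ι (u n))
  obtain hlarge | hsmall := le_or_gt r (u (n + j) - u n)
  · linarith [min_le_left r δ, hu (show n + j ≤ n + N by lia)]
  · have hstep : u (n + j) + δ ≤ u (n + j + 1) := by
      refine hgrow (n + j) ?_
      have hshadow : a + (n + j) • g + ι (u (n + j)) =
          a + n • g + ι (u n) + j • g + ι (u (n + j) - u n) := by
        rw [map_sub, add_nsmul]
        abel
      rw [hshadow]
      refine hVW (hV'V _ hjV) (hrW ?_)
      rwa [Real.dist_0_eq_abs, abs_of_nonneg (sub_nonneg.2 (hu (Nat.le_add_right n j)))]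
    linarith [min_le_right r δ, hu (show n ≤ n + j by lia), hu (show n + j + 1 ≤ n + N by lia)]

end Recurrence

section DegreeOneLifts

lemma coe_intCast_eq_zero (m : ℤ) : ((m : ℝ) : T1) = 0 :=
  (AddCircle.coe_eq_zero_iff 1).2 ⟨m, by simp only [zsmul_eq_mul, mul_one]⟩

lemma deg1Lift_sub_le (f : CircleDeg1Lift) (x y : ℝ) : f y - f x ≤ y - x + 1 := by
  have hy : f y ≤ f x + ⌈y - x⌉ := by
    rw [← f.map_add_int]
    exact f.mono (by linarith [Int.le_ceil (y - x)])
  linarith [Int.ceil_lt_add_one (y - x)]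

lemma exists_deg1Lift_eq_of_coe_eq (f : CircleDeg1Lift) {z t : ℝ} (h : (f z : T1) = t) :
    ∃ m : ℤ, f (z + m) = t := by
  obtain ⟨m, hm⟩ := (AddCircle.coe_eq_zero_iff (1 : ℝ)).1
    (show ((t - f z : ℝ) : T1) = 0 by rw [AddCircle.coe_sub, h, sub_self])
  refine ⟨m, ?_⟩
  rw [zsmul_eq_mul, mul_one] at hm
  rw [f.map_add_int, hm, add_sub_cancel]

-- Otherwise each of the values `0, 1/M, …, 1` would be attained at the left end of an interval of
-- length `ε` on which `f` gains less than `1/M`; these intervals are disjoint, hence too long.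
lemma exists_deg1Lift_value_jump (f : CircleDeg1Lift) {ε : ℝ} (hε : 0 < ε) :
    ∃ t : T1, ∃ δ > 0, ∀ z : ℝ, (f z : T1) = t → δ ≤ f (z + ε) - f z := by
  by_contra! hcon
  obtain ⟨M, hM⟩ := exists_nat_gt (2 / ε)
  have hMpos : (0 : ℝ) < M := lt_trans (by positivity) hM
  have hz (i : ℕ) : ∃ z, f z = i / M ∧ f (z + ε) < (i + 1) / M := by
    obtain ⟨z, hzt, hlt⟩ := hcon ((i / M : ℝ) : T1) (1 / M) (by positivity)
    obtain ⟨m, hm⟩ := exists_deg1Lift_eq_of_coe_eq f hzt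
    refine ⟨z + m, hm, ?_⟩
    rw [f.map_add_int] at hm
    rw [add_right_comm, f.map_add_int, add_div]
    linarith
  choose z hz_eq hz_lt using hz
  have hstep (i : ℕ) : z i + ε ≤ z (i + 1) := by
    refine (f.monotone.reflect_lt ?_).le
    rw [hz_eq]
    exact_mod_cast hz_lt i
  have hspread (i : ℕ) : z 0 + i * ε ≤ z i := by
    induction i with
    | zero => simp
    | succ i ih =>
      push_cast
      linarith [hstep i]
  have htwo : z 0 + (2 : ℕ) ≤ z M := by
    push_cast
    linarith [hspread M, (div_lt_iff₀ hε).1 hM]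
  have hgain := f.mono htwo
  rw [f.map_add_nat, hz_eq, hz_eq, div_self hMpos.ne'] at hgain
  norm_num at hgain

end DegreeOneLifts

section ContinuousFamilies

variable {X : Type*} [TopologicalSpace X]

-- Joining `q.2.1` to `q.2.2` by a segment makes the difference a homotopy starting at `0`, which
-- is therefore the lift of a continuous map through the covering `ℝ → ℝ/pℤ`.
lemma continuous_sub_of_continuous_coe {p : ℝ} {K : X → ℝ → ℝ} (hK : ∀ x, Continuous (K x))
    (hcoe : Continuous fun q : X × ℝ ↦ (K q.1 q.2 : AddCircle p)) :
    Continuous fun q : X × ℝ × ℝ ↦ K q.1 q.2.2 - K q.1 q.2.1 := by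
  let homotopy : unitInterval × X × ℝ × ℝ → ℝ := fun a ↦
    K a.2.1 (a.2.2.1 + a.1 * (a.2.2.2 - a.2.2.1)) - K a.2.1 a.2.2.1
  have hcoe_homotopy : Continuous fun a ↦ (homotopy a : AddCircle p) :=
    (hcoe.comp (by fun_prop : Continuous fun a : unitInterval × X × ℝ × ℝ ↦
      (a.2.1, a.2.2.1 + a.1 * (a.2.2.2 - a.2.2.1)))).sub
      (hcoe.comp (by fun_prop : Continuous fun a : unitInterval × X × ℝ × ℝ ↦
        (a.2.1, a.2.2.1)))
  have hcov := AddCircle.isCoveringMap_coe p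
  have hhomotopy : Continuous homotopy := by
    refine hcov.isLocalHomeomorph.continuous_lift hcov.isSeparatedMap ⟨_, hcoe_homotopy⟩ rfl ?_ ?_
    · simpa [homotopy] using continuous_const
    · intro q
      have hsegment : Continuous fun s : unitInterval ↦ q.2.1 + (s : ℝ) * (q.2.2 - q.2.1) := by
        fun_prop
      exact ((hK q.1).comp hsegment).sub (continuous_const (y := K q.1 q.2.1))
  simpa [homotopy, Function.comp_def] using
    hhomotopy.comp (.prodMk_right (1 : unitInterval))

lemma exists_isOpen_forall_jump [Nonempty X] [CompactSpace X] [T2Space X]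
    {H : X → CircleDeg1Lift} (hH : ∀ x, Continuous (H x))
    (hcoe : Continuous fun q : X × ℝ ↦ (H q.1 q.2 : T1)) {ε : ℝ} (hε : 0 < ε) :
    ∃ U : Set (X × T1), IsOpen U ∧ U.Nonempty ∧
      ∃ δ > 0, ∀ x z, (x, (H x z : T1)) ∈ U → δ ≤ H x (z + ε) - H x z := by
  obtain ⟨x₀⟩ := ‹Nonempty X›
  obtain ⟨t, δ, hδ, ht⟩ := exists_deg1Lift_value_jump (H x₀) hε
  have hjump : Continuous fun q : X × ℝ ↦ H q.1 (q.2 + ε) - H q.1 q.2 :=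
    (continuous_sub_of_continuous_coe hH hcoe).comp
      (by fun_prop : Continuous fun q : X × ℝ ↦ (q.1, q.2, q.2 + ε))
  let S : Set (X × ℝ) :=
    (Set.univ ×ˢ Set.Icc 0 1) ∩ {q | H q.1 (q.2 + ε) - H q.1 q.2 ≤ δ / 2}
  have hS : IsCompact S :=
    (isCompact_univ.prod isCompact_Icc).inter_right (isClosed_le hjump continuous_const)
  refine ⟨((fun q : X × ℝ ↦ (q.1, (H q.1 q.2 : T1))) '' S)ᶜ,
    (hS.image (continuous_fst.prodMk hcoe)).isClosed.isOpen_compl, ⟨(x₀, t), ?_⟩,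
    δ / 2, half_pos hδ, fun x z hxz ↦ ?_⟩
  · rintro ⟨⟨x, z⟩, ⟨-, hle⟩, heq⟩
    obtain ⟨rfl, hz⟩ := Prod.mk.injEq .. ▸ heq
    have hlarge := ht z hz
    simp only [Set.mem_ofPred_eq] at hle
    linarith
  · contrapose! hxz
    refine Set.notMem_compl_iff.2 ⟨(x, Int.fract z), ⟨⟨trivial, ?_⟩, ?_⟩, ?_⟩
    · exact ⟨Int.fract_nonneg z, (Int.fract_lt_one z).le⟩
    · simp only [Int.fract, Set.mem_ofPred_eq, sub_add_eq_add_sub, (H x).map_sub_int]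
      linarith
    · simp only [Int.fract, (H x).map_sub_int, AddCircle.coe_sub, coe_intCast_eq_zero, sub_zero]

end ContinuousFamilies

section Semiconjugacy

lemma sub_eq_sub_of_coe_eq_coe_add {p : ℝ} {φ ψ : ℝ → ℝ} (hφ : Continuous φ) (hψ : Continuous ψ)
    {c : AddCircle p} (h : ∀ x, (φ x : AddCircle p) = ψ x + c) (x y : ℝ) :
    φ y - φ x = ψ y - ψ x := by
  have hconst : φ x - ψ x = φ y - ψ y :=
    (AddCircle.isCoveringMap_coe p).const_of_comp (hφ.sub hψ)
      (fun a b ↦ by simp only [Pi.sub_apply, AddCircle.coe_sub, h, add_sub_cancel_left]) x y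
  linarith

lemma fiberIter_succ_apply (ω : ℝ) (F : T1 → ℝ → ℝ) (n : ℕ) (θ : T1) (x : ℝ) :
    fiberIter ω F (n + 1) θ x = F (θ + n • (ω : T1)) (fiberIter ω F n θ x) := by
  induction n generalizing θ x with
  | zero => simp only [fiberIter, zero_nsmul, add_zero]
  | succ n ih => rw [fiberIter, ih, succ_nsmul', ← add_assoc, fiberIter]

/-- `H` is the fiberwise lift of a semiconjugacy, monotone of degree one on fibers, from the skew
product with fiber maps `F` over the rotation by `ω` to the torus translation by `(ω, ρ)`. Only the
projection of `H` to the circle is required to be continuous on the total space, since the lifts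
`H θ` may be chosen independently of each other. -/
structure IsTranslationSemiconj (ω ρ : ℝ) (F : T1 → ℝ → ℝ) (H : T1 → CircleDeg1Lift) : Prop where
  continuous_fiber : ∀ θ, Continuous (H θ)
  continuous_coe : Continuous fun p : T1 × ℝ ↦ (H p.1 p.2 : T1)
  semiconj : ∀ θ x, (H (θ + (ω : T1)) (F θ x) : T1) = (H θ x : T1) + (ρ : T1)

/-- How far, measured in the coordinate `H`, the orbit of `(θ, x)` under the perturbed skew product
`F + ε` is ahead of its orbit under `F` after `n` steps: the accumulated effect of the
perturbation. -/
def lead (ω : ℝ) (F : T1 → ℝ → ℝ) (H : T1 → CircleDeg1Lift) (ε : ℝ) (θ : T1) (x : ℝ) (n : ℕ) : ℝ :=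
  H (θ + n • (ω : T1)) (fiberIter ω (fun θ x ↦ F θ x + ε) n θ x) -
    H (θ + n • (ω : T1)) (fiberIter ω F n θ x)

lemma lead_zero (ω : ℝ) (F : T1 → ℝ → ℝ) (H : T1 → CircleDeg1Lift) (ε : ℝ) (θ : T1) (x : ℝ) :
    lead ω F H ε θ x 0 = 0 := by
  simp only [lead, fiberIter, sub_self]

namespace IsTranslationSemiconj

variable {ω ρ : ℝ} {F : T1 → ℝ → ℝ} {H : T1 → CircleDeg1Lift}

lemma of_semiconj (hH : ∀ θ, Continuous (H θ)) {f h : T1 × T1 → T1 × T1} (hh : Continuous h)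
    (hf : ∀ (θ : T1) (x : ℝ), f (θ, (x : T1)) = (θ + (ω : T1), (F θ x : T1)))
    (hhH : ∀ (θ : T1) (x : ℝ), h (θ, (x : T1)) = (θ, (H θ x : T1)))
    (hsemi : ∀ p, h (f p) = ((h p).1 + (ω : T1), (h p).2 + (ρ : T1))) :
    IsTranslationSemiconj ω ρ F H where
  continuous_fiber := hH
  continuous_coe := by
    have hcoe : Continuous fun p : T1 × ℝ ↦ (p.1, (p.2 : T1)) :=
      continuous_fst.prodMk ((AddCircle.continuous_mk' 1).comp continuous_snd)
    simpa only [Function.comp_def, hhH] using continuous_snd.comp (hh.comp hcoe)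
  semiconj θ x := by
    simpa only [hf, hhH] using congrArg Prod.snd (hsemi (θ, (x : T1)))

lemma coe_map_fiberIter (hH : IsTranslationSemiconj ω ρ F H) (n : ℕ) (θ : T1) (x : ℝ) :
    (H (θ + n • (ω : T1)) (fiberIter ω F n θ x) : T1) = (H θ x : T1) + n • (ρ : T1) := by
  induction n with
  | zero => simp only [fiberIter, zero_nsmul, add_zero]
  | succ n ih =>
    rw [fiberIter_succ_apply, succ_nsmul, ← add_assoc, hH.semiconj, ih, succ_nsmul, add_assoc]

lemma exists_lead_succ_eq (hH : IsTranslationSemiconj ω ρ F H) (hF : ∀ θ, Continuous (F θ))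
    (ε : ℝ) (θ : T1) (x : ℝ) (n : ℕ) :
    ∃ z, (H (θ + (n + 1) • (ω : T1)) z : T1) =
        (H θ x : T1) + (n + 1) • (ρ : T1) + (lead ω F H ε θ x n : T1) ∧
      lead ω F H ε θ x (n + 1) = lead ω F H ε θ x n +
        (H (θ + (n + 1) • (ω : T1)) (z + ε) - H (θ + (n + 1) • (ω : T1)) z) := by
  set θn : T1 := θ + n • (ω : T1) with hθn
  have hθ_succ : θ + (n + 1) • (ω : T1) = θn + (ω : T1) := by rw [succ_nsmul, add_assoc]
  set y : ℝ := fiberIter ω (fun θ x ↦ F θ x + ε) n θ x with hy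
  have hlead : lead ω F H ε θ x n = H θn y - H θn (fiberIter ω F n θ x) := rfl
  refine ⟨F θn y, ?_, ?_⟩
  · rw [hθ_succ, hH.semiconj, hlead, AddCircle.coe_sub, hH.coe_map_fiberIter, succ_nsmul]
    abel
  · have hpreserved := sub_eq_sub_of_coe_eq_coe_add
      ((hH.continuous_fiber (θn + (ω : T1))).comp (hF θn)) (hH.continuous_fiber θn)
      (hH.semiconj θn) (fiberIter ω F n θ x) y
    simp only [Function.comp_apply] at hpreserved
    rw [lead, fiberIter_succ_apply, fiberIter_succ_apply, ← hy, ← hθn, hθ_succ, hlead]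
    linarith

lemma monotone_lead (hH : IsTranslationSemiconj ω ρ F H) (hF : ∀ θ, Continuous (F θ)) {ε : ℝ}
    (hε : 0 ≤ ε) (θ : T1) (x : ℝ) : Monotone (lead ω F H ε θ x) := by
  refine monotone_nat_of_le_succ fun n ↦ ?_
  obtain ⟨z, -, hz⟩ := hH.exists_lead_succ_eq hF ε θ x n
  rw [hz]
  exact le_add_of_nonneg_right (sub_nonneg.2 ((H _).mono (le_add_of_nonneg_right hε)))

lemma exists_lead_growth (hH : IsTranslationSemiconj ω ρ F H) (hF : ∀ θ, Continuous (F θ))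
    (hdense : DenseRange fun k : ℤ ↦ k • ((ω, ρ) : T1 × T1)) {ε : ℝ} (hε : 0 < ε) :
    ∃ c > 0, ∃ N : ℕ, ∀ θ x, ∀ k : ℕ, k * c ≤ lead ω F H ε θ x (k * N) := by
  obtain ⟨U, hU, hne, δ, hδ, hjump⟩ :=
    exists_isOpen_forall_jump hH.continuous_fiber hH.continuous_coe hε
  let ι : ℝ →ₜ+ T1 × T1 := (ContinuousAddMonoidHom.inr T1 T1).comp
    ⟨QuotientAddGroup.mk' (AddSubgroup.zmultiples (1 : ℝ)), AddCircle.continuous_mk' 1⟩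
  obtain ⟨c, hc, N, hgrowth⟩ := exists_uniform_growth hdense hU hne ι hδ
  refine ⟨c, hc, N, fun θ x k ↦ ?_⟩
  have hstep := hgrowth (θ + (ω : T1), (H θ x : T1) + (ρ : T1)) _ (hH.monotone_lead hF hε.le θ x) ?_
  · induction k with
    | zero => simp [lead_zero]
    | succ k ih =>
      push_cast
      rw [Nat.succ_mul]
      linarith [hstep (k * N)]
  · intro n hn
    obtain ⟨z, hz, hlead⟩ := hH.exists_lead_succ_eq hF ε θ x n
    have hpoint : (θ + (n + 1) • (ω : T1), (H (θ + (n + 1) • (ω : T1)) z : T1)) =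
        (θ + (ω : T1), (H θ x : T1) + (ρ : T1)) + n • ((ω, ρ) : T1 × T1) +
          ι (lead ω F H ε θ x n) := by
      rw [hz]
      change _ = (θ + (ω : T1) + n • (ω : T1) + 0,
        (H θ x : T1) + (ρ : T1) + n • (ρ : T1) + (lead ω F H ε θ x n : T1))
      simp only [succ_nsmul', add_zero, add_assoc]
    rw [hlead]
    gcongr
    exact hjump _ z (hpoint ▸ hn)

end IsTranslationSemiconj

end Semiconjugacy

section RotationNumber

lemma pos_of_tendsto_div_of_growth {a : ℕ → ℝ} {L c C : ℝ} {N : ℕ}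
    (ha : Tendsto (fun n ↦ a n / n) atTop (𝓝 L)) (hc : 0 < c)
    (hgrowth : ∀ k : ℕ, k * c ≤ a (k * N) + C) : 0 < L := by
  obtain rfl | hN := Nat.eq_zero_or_pos N
  · obtain ⟨k, hk⟩ := exists_nat_gt ((a 0 + C) / c)
    exact absurd (hgrowth k) (not_le.2 (by simpa using (div_lt_iff₀ hc).1 hk))
  · have hsub : Tendsto (fun k : ℕ ↦ a (k * N) / (k * N : ℕ) * N + C / k) atTop (𝓝 (L * N + 0)) :=
      ((ha.comp (tendsto_id.atTop_mul_const' hN)).mul_const _).add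
        (tendsto_const_div_atTop_nhds_zero_nat C)
    have hle : c ≤ L * N + 0 := ge_of_tendsto hsub <| by
      filter_upwards [eventually_gt_atTop 0] with k hk
      have hk_pos : (0 : ℝ) < k := by exact_mod_cast hk
      have hcombine : a (k * N) / (k * N : ℕ) * N + C / k = (a (k * N) + C) / k := by
        push_cast
        field_simp
      rw [hcombine, le_div_iff₀' hk_pos]
      exact hgrowth k
    exact pos_of_mul_pos_left (by linarith) (Nat.cast_nonneg N)

theorem rotNum_lt_rotNum_add {ω ρ : ℝ} {F : T1 → ℝ → ℝ} {H : T1 → CircleDeg1Lift}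
    (hH : IsTranslationSemiconj ω ρ F H) (hF : ∀ θ, Continuous (F θ))
    (hdense : DenseRange fun k : ℤ ↦ k • ((ω, ρ) : T1 × T1)) {ε : ℝ} (hε : 0 < ε) {ρ₀ ρp : ℝ}
    (hρ₀ : HasRotNum ω F ρ₀) (hρp : HasRotNum ω (fun θ x ↦ F θ x + ε) ρp) : ρ₀ < ρp := by
  obtain ⟨c, hc, N, hgrowth⟩ := hH.exists_lead_growth hF hdense hε
  have hdiff := (hρp 0 0).sub (hρ₀ 0 0)
  simp only [← sub_div, sub_zero] at hdiff
  refine sub_pos.1 (pos_of_tendsto_div_of_growth hdiff hc (N := N) (C := 1) fun k ↦ ?_)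
  exact (hgrowth 0 0 k).trans (deg1Lift_sub_le _ _ _)

end RotationNumber

section Reflection

/-- The degree-one lift `x ↦ -f (-x)`, conjugate to `f` by the orientation reversal of the line. -/
def reflectLift (f : CircleDeg1Lift) : CircleDeg1Lift where
  toFun x := -f (-x)
  monotone' x y hxy := neg_le_neg (f.mono (neg_le_neg hxy))
  map_add_one' x := by
    rw [neg_add', ← Nat.cast_one, f.map_sub_nat, neg_sub, Nat.cast_one, add_comm, sub_eq_add_neg]

lemma fiberIter_reflect (ω : ℝ) (F : T1 → ℝ → ℝ) (n : ℕ) (θ : T1) (x : ℝ) :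
    fiberIter ω (fun θ x ↦ -F θ (-x)) n θ x = -fiberIter ω F n θ (-x) := by
  induction n generalizing θ x with
  | zero => simp only [fiberIter, neg_neg]
  | succ n ih => simp only [fiberIter, ih, neg_neg]

lemma HasRotNum.reflect {ω ρ : ℝ} {F : T1 → ℝ → ℝ} (h : HasRotNum ω F ρ) :
    HasRotNum ω (fun θ x ↦ -F θ (-x)) (-ρ) := fun θ x ↦ by
  refine (h θ (-x)).neg.congr fun n ↦ ?_
  rw [fiberIter_reflect, ← neg_div]
  congr 1
  ring

lemma IsTranslationSemiconj.reflect {ω ρ : ℝ} {F : T1 → ℝ → ℝ} {H : T1 → CircleDeg1Lift}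
    (hH : IsTranslationSemiconj ω ρ F H) :
    IsTranslationSemiconj ω (-ρ) (fun θ x ↦ -F θ (-x)) (fun θ ↦ reflectLift (H θ)) where
  continuous_fiber θ := ((hH.continuous_fiber θ).comp continuous_neg).neg
  continuous_coe := (hH.continuous_coe.comp
    (by fun_prop : Continuous fun p : T1 × ℝ ↦ (p.1, -p.2))).neg
  semiconj θ x := by
    change ((-H (θ + (ω : T1)) (- -F θ (-x)) : ℝ) : T1) = ((-H θ (-x) : ℝ) : T1) + ((-ρ : ℝ) : T1)
    rw [neg_neg, AddCircle.coe_neg, hH.semiconj, AddCircle.coe_neg, AddCircle.coe_neg, neg_add]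

end Reflection

theorem semiconjugate_strictly_monotone_general {ω ρ : ℝ} {F : T1 → ℝ → ℝ}
    {H : T1 → CircleDeg1Lift} (hF : ∀ θ, Continuous (F θ)) (hH : IsTranslationSemiconj ω ρ F H)
    (hind : ∀ a b c : ℤ, (a : ℝ) * ω + (b : ℝ) * ρ + (c : ℝ) = 0 → a = 0 ∧ b = 0 ∧ c = 0)
    {ε : ℝ} (hε : 0 < ε) {ρ₀ ρp ρm : ℝ} (hρ₀ : HasRotNum ω F ρ₀)
    (hρp : HasRotNum ω (fun θ x ↦ F θ x + ε) ρp)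
    (hρm : HasRotNum ω (fun θ x ↦ F θ x + (-ε)) ρm) : ρm < ρ₀ ∧ ρ₀ < ρp := by
  have hdense := denseRange_zsmul_prod_of_rat_independent hind
  have hdense_neg := denseRange_zsmul_prod_of_rat_independent (ω := ω) (ρ := -ρ) fun a b c h ↦ by
    simpa using hind a (-b) c (by
      push_cast
      linarith)
  refine ⟨neg_lt_neg_iff.1 ?_, rotNum_lt_rotNum_add hH hF hdense hε hρ₀ hρp⟩
  refine rotNum_lt_rotNum_add hH.reflect (fun θ ↦ ((hF θ).comp continuous_neg).neg) hdense_neg hε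
    hρ₀.reflect ?_
  simpa only [neg_add, neg_neg] using hρm.reflect

/-- if `f` is semi-conjugate (by a fiber-respecting semi-conjugacy with
monotone degree-one fiber maps) to the irrational torus translation
`(θ,x) ↦ (θ+ω, x+ρ)` with `ω, ρ, 1` rationally independent, then the fibered rotation
number is strictly monotone at `f`. -/
theorem semiconjugate_strictly_monotone
    (ω : ℝ) (hω : Irrational ω)
    (F : T1 → ℝ → ℝ) (hF : IsQpfLift ω F)
    (f : T1 × T1 → T1 × T1) (hfc : Continuous f)
    (hfproj : ∀ (θ : T1) (x : ℝ), f (θ, (x : T1)) = (θ + (ω : T1), ((F θ x : ℝ) : T1)))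
    (ρ₀ : ℝ) (hρ₀ : HasRotNum ω F ρ₀)
    (ρ : ℝ)
    (h : T1 × T1 → T1 × T1) (hhc : Continuous h) (hhs : Function.Surjective h)
    (hπ : ∀ p : T1 × T1, (h p).1 = p.1)
    (hsemi : ∀ p : T1 × T1, h (f p) = ((h p).1 + (ω : T1), (h p).2 + (ρ : T1)))
    (H : T1 → ℝ → ℝ)
    (hHc : ∀ θ, Continuous (H θ)) (hHm : ∀ θ, Monotone (H θ))
    (hHper : ∀ (θ : T1) (x : ℝ), H θ (x + 1) = H θ x + 1)
    (hHproj : ∀ (θ : T1) (x : ℝ), h (θ, (x : T1)) = (θ, ((H θ x : ℝ) : T1)))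
    (hind : ∀ a b c : ℤ, (a : ℝ) * ω + (b : ℝ) * ρ + (c : ℝ) = 0 → a = 0 ∧ b = 0 ∧ c = 0)
    (ε : ℝ) (hε : 0 < ε)
    (ρp : ℝ) (hρp : HasRotNum ω (fun θ x => F θ x + ε) ρp)
    (ρm : ℝ) (hρm : HasRotNum ω (fun θ x => F θ x + (-ε)) ρm) :
    ρm < ρ₀ ∧ ρ₀ < ρp := by
  exact semiconjugate_strictly_monotone_general (H := fun θ ↦ ⟨⟨H θ, hHm θ⟩, hHper θ⟩)
    (fun θ ↦ hF.cont.comp (.prodMk_right θ))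
    (IsTranslationSemiconj.of_semiconj hHc hhc hfproj hHproj hsemi) hind hε hρ₀ hρp hρm
end
end
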